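/- Let u₀ be a Schwartz function on ℝ² and τ ≥ 0, and let e^{τL_∞}u₀ denote the value at time τ of the semigroup generated by L_∞ applied to u₀. Then: (i) there is a universal constant C such that for every 0 ≤ m ≤ 2, ‖e^{τL_∞}u₀‖_{L²(m)} ≤ C e^{(1−m/2)τ} ‖u₀‖_{L²(m)}; (ii) there is a universal constant C such that for every 2 ≤ m ≤ 3, ‖e^{τL_∞}u₀ − M(u₀)G‖_{L²(m)} ≤ C e^{−(m−2)τ/2} ‖u₀ − M(u₀)G‖_{L²(m)}; (iii) for every m ≥ 3 there is a constant C = C(m) such that ‖e^{τL_∞}u₀ − M(u₀)G‖_{L²(m)} ≤ C e^{−τ/2} ‖u₀ − M(u₀)G‖_{L²(m)}. Here M(u₀) := ∫_{ℝ²} u₀(X,Y) dX dY and G(X,Y) = (4π)^{-1} e^{−(X²+Y²)/4}. -/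

import Mathlib

open MeasureTheory SchwartzMap
open scoped ENNReal

/-- The Fourier transform `f̂(ξ,η) = ∫ f(X,Y) e^{-i(Xξ + Yη)} dX dY`. -/
noncomputable def ft2 (f : ℝ × ℝ → ℂ) (ξ η : ℝ) : ℂ :=
  ∫ p : ℝ × ℝ, f p * Complex.exp (-Complex.I * ((p.1 * ξ + p.2 * η : ℝ) : ℂ))

/-- The backward characteristic `ξ₀(τ,ξ,η)`. -/
noncomputable def xiBack (τ ξ η : ℝ) : ℝ :=
  (3 * ξ - Real.sqrt 3 * η) / 2 * Real.exp (-τ / 2) +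
    (-ξ + Real.sqrt 3 * η) / 2 * Real.exp (-(3 * τ) / 2)

/-- The backward characteristic `η₀(τ,ξ,η)`. -/
noncomputable def etaBack (τ ξ η : ℝ) : ℝ :=
  (Real.sqrt 3 * ξ - η) / 2 * Real.exp (-τ / 2) +
    (-(Real.sqrt 3) * ξ + 3 * η) / 2 * Real.exp (-(3 * τ) / 2)

/-- The phase `Φ(τ,ξ,η)`. -/
noncomputable def phiFun (τ ξ η : ℝ) : ℝ :=
  -(1 - Real.exp (-τ)) ^ 3 * ξ ^ 2 -
    2 * Real.sqrt 3 * Real.exp (-τ) * (1 - Real.exp (-τ)) ^ 2 * ξ * η -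
    (1 - Real.exp (-τ)) * (1 + 3 * Real.exp (-2 * τ)) * η ^ 2

/-- The semigroup `e^{τ L_∞} u₀`: the function whose Fourier transform is
`e^{Φ(τ,ξ,η)} û₀(ξ₀(τ,ξ,η), η₀(τ,ξ,η))`, realized by the inverse Fourier integral. -/
noncomputable def semigroupLinfty (τ : ℝ) (u₀ : 𝓢(ℝ × ℝ, ℝ)) : ℝ × ℝ → ℂ :=
  fun P => (((2 * Real.pi) ^ (-2 : ℤ) : ℝ) : ℂ) *
    ∫ w : ℝ × ℝ,
      ((Real.exp (phiFun τ w.1 w.2) : ℝ) : ℂ) *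
        ft2 (fun p => (u₀ p : ℂ)) (xiBack τ w.1 w.2) (etaBack τ w.1 w.2) *
        Complex.exp (Complex.I * ((P.1 * w.1 + P.2 * w.2 : ℝ) : ℂ))

/-- The weighted norm `‖f‖_{L²(m)} = ‖⟨X,Y⟩^m f‖_{L²(ℝ²)}`, `⟨X,Y⟩ = (1+X²+Y²)^{1/2}`. -/
noncomputable def wnorm {E : Type*} [NormedAddCommGroup E] (m : ℝ) (f : ℝ × ℝ → E) : ℝ≥0∞ :=
  eLpNorm (fun p => (1 + p.1 ^ 2 + p.2 ^ 2) ^ (m / 2) * ‖f p‖) 2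

/-- The Gaussian `G(X,Y) = (4π)⁻¹ e^{-(X²+Y²)/4}`. -/
noncomputable def gauss2 (P : ℝ × ℝ) : ℝ :=
  (4 * Real.pi)⁻¹ * Real.exp (-(P.1 ^ 2 + P.2 ^ 2) / 4)

/-!
Inverting the Fourier formula for `τ > 0` gives
`(e^{τ L_∞} u)(P) = ∫ K_a(P - A p) u(p) dp` with `a = e^{-τ}`, where `K_a` is a Gaussian of
covariance bounded uniformly in `τ` and degenerate only as `τ → 0`, and `A` is the transpose of the
linear backward flow, so that `|A p|² ≤ 4 a |p|²` and `det A = a²`. By Peetre's inequality the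
weight `⟨P⟩^m` moves past `K_a` onto `A p`, at the price of replacing `K_a` by a wider Gaussian, and
`⟨A p⟩² / ⟨p⟩² ≤ 4 (a + ⟨p⟩⁻²)`. In the Schur test the term `a` is integrated against the Gaussian
in `A p`, which produces a factor `(det A)⁻¹ = a⁻²`, while the term `⟨p⟩⁻²` is square integrable.
For data of mean zero, `K_a(P - A p)` may be replaced by `K_a(P - A p) - K_a(P)`, and the smoothness
of `K_a` gains a factor `|A p|^{2t}` with `t ≤ 1/2`, hence `a^t = e^{-tτ}`. Subtracting `M(u₀) G`
reduces to mean zero because `G` is stationary.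
-/

/-! ### Gaussian integrals of binary quadratic forms -/

/-- The binary quadratic form with Gram matrix `!![α, β; β, γ]`. -/
def binQuad (α β γ : ℝ) (z : ℝ × ℝ) : ℝ :=
  α * z.1 ^ 2 + 2 * β * z.1 * z.2 + γ * z.2 ^ 2

/-- The squared Euclidean length of a point of the plane (the norm of `ℝ × ℝ` is the sup norm). -/
def sqLen (z : ℝ × ℝ) : ℝ := z.1 ^ 2 + z.2 ^ 2

@[fun_prop]
lemma continuous_binQuad (α β γ : ℝ) : Continuous (binQuad α β γ) := by
  unfold binQuad; fun_prop

@[fun_prop]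
lemma continuous_sqLen : Continuous sqLen := by
  unfold sqLen; fun_prop

lemma sqLen_nonneg (z : ℝ × ℝ) : 0 ≤ sqLen z := by
  unfold sqLen; positivity

section BinQuad

variable {α β γ : ℝ}

lemma binQuad_coeff_pos (hα : 0 < α) (hD : 0 < α * γ - β ^ 2) : 0 < γ :=
  pos_of_mul_pos_right (by linarith [sq_nonneg β]) hα.le

lemma det_div_trace_mul_sqLen_le_binQuad (hα : 0 < α) (hD : 0 < α * γ - β ^ 2) (z : ℝ × ℝ) :
    (α * γ - β ^ 2) / (α + γ) * sqLen z ≤ binQuad α β γ z := by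
  have hγ := binQuad_coeff_pos hα hD
  rw [div_mul_eq_mul_div, div_le_iff₀ (by positivity), sqLen, binQuad]
  nlinarith [sq_nonneg (α * z.1 + β * z.2), sq_nonneg (β * z.1 + γ * z.2)]

lemma integrable_exp_neg_binQuad (hα : 0 < α) (hD : 0 < α * γ - β ^ 2) :
    Integrable fun w => Real.exp (-binQuad α β γ w) := by
  have hγ := binQuad_coeff_pos hα hD
  have hδ : 0 < (α * γ - β ^ 2) / (α + γ) := by positivity
  refine ((integrable_exp_neg_mul_sq hδ).mul_prod (integrable_exp_neg_mul_sq hδ)).mono'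
    (by fun_prop) (ae_of_all _ fun w => ?_)
  rw [Real.norm_of_nonneg (Real.exp_nonneg _), ← Real.exp_add, Real.exp_le_exp]
  have := det_div_trace_mul_sqLen_le_binQuad hα hD w
  rw [sqLen] at this
  linarith

lemma integral_cexp_neg_real_quadratic {a : ℝ} (ha : 0 < a) (c d : ℂ) :
    ∫ t : ℝ, Complex.exp (-a * t ^ 2 + c * t + d) =
      (√(Real.pi / a) : ℝ) * Complex.exp (d + c ^ 2 / (4 * a)) := by
  have h := integral_cexp_quadratic (b := -(a : ℂ)) (by simpa using ha) c d
  rw [neg_neg, mul_neg, div_neg, sub_neg_eq_add] at h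
  rw [h, Real.sqrt_eq_rpow, Complex.ofReal_cpow (by positivity)]
  push_cast
  rfl

lemma norm_ofReal_mul_cexp_I (r s : ℝ) : ‖(r : ℂ) * Complex.exp (Complex.I * s)‖ = |r| := by
  rw [norm_mul, mul_comm Complex.I, Complex.norm_exp_ofReal_mul_I, mul_one, Complex.norm_real,
    Real.norm_eq_abs]

lemma integral_fst_exp_neg_binQuad_mul_cexp (hα : 0 < α) (z : ℝ × ℝ) (η : ℝ) :
    ∫ ξ : ℝ, (Real.exp (-binQuad α β γ (ξ, η)) : ℂ) *
        Complex.exp (Complex.I * ((z.1 * ξ + z.2 * η : ℝ) : ℂ)) =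
      (√(Real.pi / α) : ℝ) *
        Complex.exp (-((α * γ - β ^ 2) / α : ℝ) * η ^ 2 +
          Complex.I * (z.2 - β * z.1 / α) * η + ((-(z.1 ^ 2 / (4 * α)) : ℝ) : ℂ)) := by
  have hα' : (α : ℂ) ≠ 0 := by exact_mod_cast hα.ne'
  convert! integral_cexp_neg_real_quadratic hα (Complex.I * z.1 - 2 * β * η)
    (-γ * η ^ 2 + Complex.I * (z.2 * η)) using 3 with ξ
  · rw [Complex.ofReal_exp, ← Complex.exp_add, binQuad]
    push_cast
    ring_nf
  · push_cast
    field_simp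
    linear_combination -z.1 ^ 2 * Complex.I_sq

lemma integral_exp_neg_binQuad_mul_cexp (hα : 0 < α) (hD : 0 < α * γ - β ^ 2) (z : ℝ × ℝ) :
    ∫ w : ℝ × ℝ, (Real.exp (-binQuad α β γ w) : ℂ) *
        Complex.exp (Complex.I * ((z.1 * w.1 + z.2 * w.2 : ℝ) : ℂ)) =
      ((Real.pi / √(α * γ - β ^ 2) *
        Real.exp (-binQuad γ (-β) α z / (4 * (α * γ - β ^ 2))) : ℝ) : ℂ) := by
  have hα' : (α : ℂ) ≠ 0 := by exact_mod_cast hα.ne'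
  have hD' : ((α * γ - β ^ 2 : ℝ) : ℂ) ≠ 0 := by exact_mod_cast hD.ne'
  have hint : Integrable fun w : ℝ × ℝ => (Real.exp (-binQuad α β γ w) : ℂ) *
      Complex.exp (Complex.I * ((z.1 * w.1 + z.2 * w.2 : ℝ) : ℂ)) :=
    (integrable_exp_neg_binQuad hα hD).mono' (by fun_prop) (ae_of_all _ fun w => by
      rw [norm_ofReal_mul_cexp_I, abs_of_pos (Real.exp_pos _)])
  have hconst : √(Real.pi / α) * √(Real.pi / ((α * γ - β ^ 2) / α)) =
      Real.pi / √(α * γ - β ^ 2) := by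
    rw [← Real.sqrt_mul (by positivity),
      show Real.pi / α * (Real.pi / ((α * γ - β ^ 2) / α)) = Real.pi ^ 2 / (α * γ - β ^ 2) by
        field_simp,
      Real.sqrt_div' _ hD.le, Real.sqrt_sq Real.pi_pos.le]
  rw [Measure.volume_eq_prod, integral_prod_symm _ hint]
  simp only [integral_fst_exp_neg_binQuad_mul_cexp hα, integral_const_mul]
  rw [integral_cexp_neg_real_quadratic (div_pos hD hα), ← mul_assoc, ← Complex.ofReal_mul, hconst,
    Complex.ofReal_mul, Complex.ofReal_exp]
  congr 2
  push_cast [binQuad] at hD' ⊢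
  field_simp
  rw [Complex.I_sq]
  ring

lemma integral_exp_neg_binQuad (hα : 0 < α) (hD : 0 < α * γ - β ^ 2) :
    ∫ w, Real.exp (-binQuad α β γ w) = Real.pi / √(α * γ - β ^ 2) := by
  have h := integral_exp_neg_binQuad_mul_cexp hα hD 0
  simp only [Prod.fst_zero, Prod.snd_zero, zero_mul, add_zero, Complex.ofReal_zero, mul_zero,
    Complex.exp_zero, mul_one, binQuad, ne_eq, OfNat.ofNat_ne_zero, not_false_eq_true, zero_pow,
    neg_zero, zero_div, Real.exp_zero, integral_complex_ofReal] at h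
  exact_mod_cast h

end BinQuad

/-! ### The kernel of the semigroup -/

/-- The transpose of the backward characteristic map `w ↦ (ξ₀(τ,w), η₀(τ,w))`: it transports the
mass of the initial datum forward in time. -/
noncomputable def charTranspose (τ : ℝ) : ℝ × ℝ →ₗ[ℝ] ℝ × ℝ :=
  Matrix.toLin (.finTwoProd ℝ) (.finTwoProd ℝ)
    !![(3 * Real.exp (-τ / 2) - Real.exp (-(3 * τ) / 2)) / 2,
        √3 * (Real.exp (-τ / 2) - Real.exp (-(3 * τ) / 2)) / 2;
      -√3 * (Real.exp (-τ / 2) - Real.exp (-(3 * τ) / 2)) / 2,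
        (3 * Real.exp (-(3 * τ) / 2) - Real.exp (-τ / 2)) / 2]

/-- The quadratic form `-Φ`, as a function of `a = e^{-τ}`. -/
noncomputable def phaseForm (a : ℝ) : ℝ × ℝ → ℝ :=
  binQuad ((1 - a) ^ 3) (√3 * a * (1 - a) ^ 2) ((1 - a) * (1 + 3 * a ^ 2))

/-- The dual of `phaseForm a`, which is the exponent of the kernel up to the factor `-1/4`. -/
noncomputable def kernelForm (a : ℝ) : ℝ × ℝ → ℝ :=
  binQuad ((1 + 3 * a ^ 2) / (1 - a) ^ 3) (-(√3 * a / (1 - a) ^ 2)) (1 / (1 - a))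

/-- The inverse Fourier transform of `e^Φ`, as a function of `a = e^{-τ}`. -/
noncomputable def gaussKernel (a : ℝ) (z : ℝ × ℝ) : ℝ :=
  (4 * Real.pi * (1 - a) ^ 2)⁻¹ * Real.exp (-kernelForm a z / 4)

/-- The integral operator with kernel `gaussKernel`, composed with the transport along
`charTranspose`: for `τ > 0` it is the semigroup in physical variables. -/
noncomputable def kernelOp (τ : ℝ) (v : ℝ × ℝ → ℝ) (P : ℝ × ℝ) : ℝ :=
  ∫ p, gaussKernel (Real.exp (-τ)) (P - charTranspose τ p) * v p

/-- The Fourier formula for the semigroup, for initial data that need not be Schwartz functions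
(it is also applied to the Gaussian `gauss2`). -/
noncomputable def fourierEvolution (τ : ℝ) (u : ℝ × ℝ → ℝ) (P : ℝ × ℝ) : ℂ :=
  (((2 * Real.pi) ^ (-2 : ℤ) : ℝ) : ℂ) *
    ∫ w : ℝ × ℝ, (Real.exp (phiFun τ w.1 w.2) : ℂ) *
      ft2 (fun p => (u p : ℂ)) (xiBack τ w.1 w.2) (etaBack τ w.1 w.2) *
      Complex.exp (Complex.I * ((P.1 * w.1 + P.2 * w.2 : ℝ) : ℂ))

@[fun_prop]
lemma continuous_charTranspose (τ : ℝ) : Continuous (charTranspose τ) :=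
  (charTranspose τ).continuous_of_finiteDimensional

@[fun_prop]
lemma continuous_kernelForm (a : ℝ) : Continuous (kernelForm a) :=
  continuous_binQuad _ _ _

@[fun_prop]
lemma continuous_gaussKernel (a : ℝ) : Continuous (gaussKernel a) := by
  unfold gaussKernel; fun_prop

lemma gaussKernel_nonneg (a : ℝ) (z : ℝ × ℝ) : 0 ≤ gaussKernel a z := by
  unfold gaussKernel; positivity

lemma charTranspose_pairing (τ : ℝ) (p w : ℝ × ℝ) :
    p.1 * xiBack τ w.1 w.2 + p.2 * etaBack τ w.1 w.2 =
      (charTranspose τ p).1 * w.1 + (charTranspose τ p).2 * w.2 := by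
  simp only [xiBack, etaBack, charTranspose, Matrix.toLin_finTwoProd_apply]
  ring

lemma det_charTranspose (τ : ℝ) : LinearMap.det (charTranspose τ) = Real.exp (-τ) ^ 2 := by
  have h3 : √3 * √3 = 3 := Real.mul_self_sqrt (by norm_num)
  have hprod : Real.exp (-τ / 2) * Real.exp (-(3 * τ) / 2) = Real.exp (-τ) ^ 2 := by
    rw [← Real.exp_add, ← Real.exp_nat_mul]
    ring_nf
  rw [charTranspose, LinearMap.det_toLin, Matrix.det_fin_two_of, ← hprod]
  linear_combination (Real.exp (-τ / 2) - Real.exp (-(3 * τ) / 2)) ^ 2 / 4 * h3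

lemma one_sub_exp_neg_pos {τ : ℝ} (hτ : 0 < τ) : 0 < 1 - Real.exp (-τ) := by
  simpa using hτ

lemma det_phaseForm (a : ℝ) :
    (1 - a) ^ 3 * ((1 - a) * (1 + 3 * a ^ 2)) - (√3 * a * (1 - a) ^ 2) ^ 2 = (1 - a) ^ 4 := by
  rw [mul_pow, mul_pow, Real.sq_sqrt zero_le_three]
  ring

lemma phiFun_eq_neg_phaseForm (τ : ℝ) (w : ℝ × ℝ) :
    phiFun τ w.1 w.2 = -phaseForm (Real.exp (-τ)) w := by
  have hexp : Real.exp (-2 * τ) = Real.exp (-τ) ^ 2 := by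
    rw [← Real.exp_nat_mul]
    ring_nf
  rw [phiFun, phaseForm, binQuad, hexp]
  ring

lemma integrable_exp_phiFun {τ : ℝ} (hτ : 0 < τ) :
    Integrable fun w : ℝ × ℝ => Real.exp (phiFun τ w.1 w.2) := by
  have hb := one_sub_exp_neg_pos hτ
  simp only [phiFun_eq_neg_phaseForm]
  exact integrable_exp_neg_binQuad (by positivity) (by rw [det_phaseForm]; positivity)

lemma inverse_fourier_exp_phiFun {τ : ℝ} (hτ : 0 < τ) (z : ℝ × ℝ) :
    (((2 * Real.pi) ^ (-2 : ℤ) : ℝ) : ℂ) * ∫ w : ℝ × ℝ, (Real.exp (phiFun τ w.1 w.2) : ℂ) *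
        Complex.exp (Complex.I * ((z.1 * w.1 + z.2 * w.2 : ℝ) : ℂ)) =
      (gaussKernel (Real.exp (-τ)) z : ℂ) := by
  have hb := one_sub_exp_neg_pos hτ
  simp only [phiFun_eq_neg_phaseForm, phaseForm]
  rw [integral_exp_neg_binQuad_mul_cexp (by positivity) (by rw [det_phaseForm]; positivity),
    det_phaseForm, ← Complex.ofReal_mul, gaussKernel, ← mul_assoc,
    show (1 - Real.exp (-τ)) ^ 4 = ((1 - Real.exp (-τ)) ^ 2) ^ 2 by ring,
    Real.sqrt_sq (by positivity)]
  congr 3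
  · rw [zpow_neg, zpow_ofNat]
    field_simp
    norm_num
  · rw [kernelForm, binQuad, binQuad]
    field_simp

lemma integrable_exp_phiFun_mul_cexp {τ : ℝ} (hτ : 0 < τ) {u : ℝ × ℝ → ℝ} (hu : Integrable u)
    (P : ℝ × ℝ) :
    Integrable (fun z : (ℝ × ℝ) × (ℝ × ℝ) => (u z.2 : ℂ) * ((Real.exp (phiFun τ z.1.1 z.1.2) : ℂ) *
      Complex.exp (Complex.I * (((P - charTranspose τ z.2).1 * z.1.1 +
        (P - charTranspose τ z.2).2 * z.1.2 : ℝ) : ℂ)))) (volume.prod volume) := by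
  refine ((integrable_exp_phiFun hτ).mul_prod hu).norm.mono' ?_ (ae_of_all _ fun z => ?_)
  · refine (Complex.continuous_ofReal.comp_aestronglyMeasurable hu.1.comp_snd).mul
      (Continuous.aestronglyMeasurable ?_)
    unfold phiFun
    fun_prop
  · rw [norm_mul, norm_ofReal_mul_cexp_I, Complex.norm_real, norm_mul, ← Real.norm_eq_abs, mul_comm]

lemma fourierEvolution_eq_kernelOp {τ : ℝ} (hτ : 0 < τ) {u : ℝ × ℝ → ℝ} (hu : Integrable u)
    (P : ℝ × ℝ) : fourierEvolution τ u P = kernelOp τ u P := by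
  have hintegrand : ∀ w : ℝ × ℝ, (Real.exp (phiFun τ w.1 w.2) : ℂ) *
        ft2 (fun p => (u p : ℂ)) (xiBack τ w.1 w.2) (etaBack τ w.1 w.2) *
        Complex.exp (Complex.I * ((P.1 * w.1 + P.2 * w.2 : ℝ) : ℂ)) =
      ∫ p : ℝ × ℝ, (u p : ℂ) * ((Real.exp (phiFun τ w.1 w.2) : ℂ) *
        Complex.exp (Complex.I * (((P - charTranspose τ p).1 * w.1 +
          (P - charTranspose τ p).2 * w.2 : ℝ) : ℂ))) := by
    intro w
    rw [ft2, ← integral_const_mul, ← integral_mul_const]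
    congr with p
    rw [charTranspose_pairing, mul_assoc, mul_assoc, ← Complex.exp_add, mul_left_comm]
    simp only [Prod.fst_sub, Prod.snd_sub]
    push_cast
    ring_nf
  rw [fourierEvolution, kernelOp, ← integral_complex_ofReal]
  simp only [hintegrand]
  rw [integral_integral_swap (integrable_exp_phiFun_mul_cexp hτ hu P), ← integral_const_mul]
  congr with p
  rw [integral_const_mul, mul_left_comm, inverse_fourier_exp_phiFun hτ]
  push_cast
  ring

/-! ### The stationary Gaussian -/

lemma gauss2_eq_exp_neg_binQuad (p : ℝ × ℝ) :
    gauss2 p = (4 * Real.pi)⁻¹ * Real.exp (-binQuad (1 / 4) 0 (1 / 4) p) := by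
  rw [gauss2, binQuad]
  ring_nf

lemma integrable_gauss2 : Integrable gauss2 := by
  simp only [funext gauss2_eq_exp_neg_binQuad]
  exact (integrable_exp_neg_binQuad (by norm_num) (by norm_num)).const_mul _

lemma ft2_gauss2 (ξ η : ℝ) :
    ft2 (fun p => (gauss2 p : ℂ)) ξ η = (Real.exp (-(ξ ^ 2 + η ^ 2)) : ℂ) := by
  have hcongr : ∀ p : ℝ × ℝ,
      (gauss2 p : ℂ) * Complex.exp (-Complex.I * ((p.1 * ξ + p.2 * η : ℝ) : ℂ)) =
        ((4 * Real.pi)⁻¹ : ℝ) * ((Real.exp (-binQuad (1 / 4) 0 (1 / 4) p) : ℂ) *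
          Complex.exp (Complex.I * ((-ξ * p.1 + -η * p.2 : ℝ) : ℂ))) := by
    intro p
    rw [gauss2_eq_exp_neg_binQuad, Complex.ofReal_mul, mul_assoc]
    push_cast
    ring_nf
  have hsqrt : √(1 / 4 * (1 / 4) - 0 ^ 2 : ℝ) = 1 / 4 := by
    rw [show (1 / 4 * (1 / 4) - 0 ^ 2 : ℝ) = (1 / 4) ^ 2 by norm_num]
    exact Real.sqrt_sq (by norm_num)
  simp only [ft2, hcongr]
  rw [integral_const_mul,
    integral_exp_neg_binQuad_mul_cexp (z := (-ξ, -η)) (by norm_num) (by norm_num), hsqrt,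
    ← Complex.ofReal_mul, ← mul_assoc,
    show (4 * Real.pi)⁻¹ * (Real.pi / (1 / 4)) = 1 by field_simp, one_mul, binQuad]
  ring_nf

lemma integral_gauss2 : ∫ p, gauss2 p = 1 := by
  have h := ft2_gauss2 0 0
  simp only [ft2, mul_zero, add_zero, Complex.ofReal_zero, Complex.exp_zero, mul_one, ne_eq,
    OfNat.ofNat_ne_zero, not_false_eq_true, zero_pow, neg_zero, Real.exp_zero,
    integral_complex_ofReal] at h
  exact_mod_cast h

lemma phiFun_sub_sq_back (τ ξ η : ℝ) :
    phiFun τ ξ η - (xiBack τ ξ η ^ 2 + etaBack τ ξ η ^ 2) = -(ξ ^ 2 + η ^ 2) := by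
  have h3 : √3 ^ 2 = 3 := Real.sq_sqrt zero_le_three
  have hpow : ∀ (n : ℕ) (s : ℝ), s = n * (-τ / 2) → Real.exp s = Real.exp (-τ / 2) ^ n := by
    rintro n _ rfl
    exact Real.exp_nat_mul _ n
  rw [phiFun, xiBack, etaBack, hpow 2 (-τ) (by push_cast; ring),
    hpow 4 (-2 * τ) (by push_cast; ring), hpow 3 (-(3 * τ) / 2) (by push_cast; ring)]
  ring_nf
  simp only [h3]
  ring

lemma kernelOp_gauss2 {τ : ℝ} (hτ : 0 < τ) : kernelOp τ gauss2 = gauss2 := by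
  ext P
  apply Complex.ofReal_injective
  have hintegrand : ∀ w : ℝ × ℝ, (Real.exp (phiFun τ w.1 w.2) : ℂ) *
        ft2 (fun p => (gauss2 p : ℂ)) (xiBack τ w.1 w.2) (etaBack τ w.1 w.2) =
      (Real.exp (-binQuad 1 0 1 w) : ℂ) := by
    intro w
    rw [ft2_gauss2, ← Complex.ofReal_mul, ← Real.exp_add, ← sub_eq_add_neg, phiFun_sub_sq_back,
      binQuad]
    ring_nf
  rw [← fourierEvolution_eq_kernelOp hτ integrable_gauss2, fourierEvolution]
  simp only [hintegrand]
  rw [integral_exp_neg_binQuad_mul_cexp one_pos (by norm_num), ← Complex.ofReal_mul, gauss2,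
    binQuad, show (1 * 1 - 0 ^ 2 : ℝ) = 1 by norm_num, Real.sqrt_one, ← mul_assoc]
  congr 3
  · rw [zpow_neg, zpow_ofNat]
    field_simp
    norm_num
  · ring

/-! ### Time zero: Fourier inversion -/

lemma fourier_comp_ofLp (f : ℝ × ℝ → ℂ) (w : ℝ × ℝ) :
    FourierTransform.fourier (fun x : WithLp 2 (ℝ × ℝ) => f x.ofLp) (WithLp.toLp 2 w) =
      ft2 f (2 * Real.pi * w.1) (2 * Real.pi * w.2) := by
  rw [Real.fourier_eq', ← (WithLp.volume_preserving_toLp ℝ ℝ).integral_comp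
    (WithLp.prodContinuousLinearEquiv 2 ℝ ℝ ℝ).symm.toHomeomorph.measurableEmbedding, ft2]
  congr with p
  rw [smul_eq_mul, mul_comm, WithLp.prod_inner_apply, Real.inner_apply, Real.inner_apply]
  push_cast
  ring_nf

lemma integral_ft2_mul_cexp (f : 𝓢(ℝ × ℝ, ℂ)) (P : ℝ × ℝ) :
    (((2 * Real.pi) ^ (-2 : ℤ) : ℝ) : ℂ) * ∫ w : ℝ × ℝ, ft2 f w.1 w.2 *
        Complex.exp (Complex.I * ((P.1 * w.1 + P.2 * w.2 : ℝ) : ℂ)) = f P := by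
  let g : 𝓢(WithLp 2 (ℝ × ℝ), ℂ) :=
    SchwartzMap.compCLMOfContinuousLinearEquiv ℝ (WithLp.prodContinuousLinearEquiv 2 ℝ ℝ ℝ) f
  have hfourier : ∀ w : ℝ × ℝ, FourierTransform.fourier (g : WithLp 2 (ℝ × ℝ) → ℂ)
      (WithLp.toLp 2 w) = ft2 f (2 * Real.pi * w.1) (2 * Real.pi * w.2) := fourier_comp_ofLp f
  have hinv := congrFun (g.continuous.fourierInv_fourier_eq g.integrable
    (by rw [← SchwartzMap.fourier_coe]; exact SchwartzMap.integrable _)) (WithLp.toLp 2 P)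
  rw [Real.fourierInv_eq', ← (WithLp.volume_preserving_toLp ℝ ℝ).integral_comp
    (WithLp.prodContinuousLinearEquiv 2 ℝ ℝ ℝ).symm.toHomeomorph.measurableEmbedding] at hinv
  simp only [hfourier] at hinv
  have hscale := Measure.integral_comp_smul (volume : Measure (ℝ × ℝ)) (fun w : ℝ × ℝ =>
    ft2 f w.1 w.2 * Complex.exp (Complex.I * ((P.1 * w.1 + P.2 * w.2 : ℝ) : ℂ))) (2 * Real.pi)
  rw [Module.finrank_prod, Module.finrank_self, abs_of_pos (by positivity),
    Complex.real_smul] at hscale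
  rw [zpow_neg, zpow_ofNat, ← hscale]
  refine Eq.trans ?_ hinv
  congr with w
  rw [smul_eq_mul, mul_comm, WithLp.prod_inner_apply, Real.inner_apply, Real.inner_apply,
    Prod.smul_fst, Prod.smul_snd, smul_eq_mul, smul_eq_mul]
  push_cast
  ring_nf

lemma semigroupLinfty_zero (u₀ : 𝓢(ℝ × ℝ, ℝ)) (P : ℝ × ℝ) :
    semigroupLinfty 0 u₀ P = (u₀ P : ℂ) := by
  have hphi (w : ℝ × ℝ) : phiFun 0 w.1 w.2 = 0 := by simp [phiFun]
  have hxi (w : ℝ × ℝ) : xiBack 0 w.1 w.2 = w.1 := by simp [xiBack]; ring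
  have heta (w : ℝ × ℝ) : etaBack 0 w.1 w.2 = w.2 := by simp [etaBack]; ring
  simp only [semigroupLinfty, hphi, hxi, heta, Real.exp_zero, Complex.ofReal_one, one_mul]
  exact integral_ft2_mul_cexp (SchwartzMap.postcompCLM Complex.ofRealCLM u₀) P

lemma semigroupLinfty_of_pos {τ : ℝ} (hτ : 0 < τ) (u₀ : 𝓢(ℝ × ℝ, ℝ)) (P : ℝ × ℝ) :
    semigroupLinfty τ u₀ P = kernelOp τ u₀ P :=
  fourierEvolution_eq_kernelOp hτ u₀.integrable P

/-! ### Pointwise bounds of the kernel -/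

/-- The weight `⟨X,Y⟩² = 1 + X² + Y²`. -/
def weight (z : ℝ × ℝ) : ℝ := 1 + z.1 ^ 2 + z.2 ^ 2

/-- A Gaussian dominating polynomial weights times `gaussKernel a`. -/
noncomputable def kernelMajorant (a : ℝ) (z : ℝ × ℝ) : ℝ :=
  ((1 - a) ^ 2)⁻¹ * Real.exp (-kernelForm a z / 8)

@[fun_prop]
lemma continuous_weight : Continuous weight := by
  unfold weight; fun_prop

@[fun_prop]
lemma continuous_kernelMajorant (a : ℝ) : Continuous (kernelMajorant a) := by
  unfold kernelMajorant; fun_prop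

lemma kernelMajorant_nonneg (a : ℝ) (z : ℝ × ℝ) : 0 ≤ kernelMajorant a z := by
  unfold kernelMajorant; positivity

lemma weight_eq (z : ℝ × ℝ) : weight z = 1 + sqLen z :=
  add_assoc _ _ _

lemma one_le_weight (z : ℝ × ℝ) : 1 ≤ weight z := by
  linarith [weight_eq z, sqLen_nonneg z]

lemma weight_pos (z : ℝ × ℝ) : 0 < weight z :=
  one_pos.trans_le (one_le_weight z)

lemma weight_le_two_mul_weight_sub_mul_weight (P q : ℝ × ℝ) :
    weight P ≤ 2 * weight (P - q) * weight q := by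
  have hsplit : sqLen P ≤ 2 * (sqLen (P - q) + sqLen q) := by
    simp only [sqLen, Prod.fst_sub, Prod.snd_sub]
    nlinarith [sq_nonneg (P.1 - 2 * q.1), sq_nonneg (P.2 - 2 * q.2)]
  rw [weight_eq, weight_eq, weight_eq]
  nlinarith [mul_nonneg (sqLen_nonneg (P - q)) (sqLen_nonneg q)]

lemma abs_le_sqrt_sqLen (q : ℝ × ℝ) : |q.1| ≤ √(sqLen q) ∧ |q.2| ≤ √(sqLen q) :=
  ⟨Real.abs_le_sqrt (by rw [sqLen]; nlinarith), Real.abs_le_sqrt (by rw [sqLen]; nlinarith)⟩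

lemma abs_binQuad_sub_le {α β γ c : ℝ} (hα : |α| ≤ c) (hβ : |β| ≤ c) (hγ : |γ| ≤ c)
    (P : ℝ × ℝ) {q : ℝ × ℝ} (hq : sqLen q ≤ 1) :
    |binQuad α β γ (P - q) - binQuad α β γ P| ≤ 8 * c * √(sqLen q) * weight P := by
  obtain ⟨hq₁, hq₂⟩ := abs_le_sqrt_sqLen q
  have hsqrt : √(sqLen q) ≤ 1 := Real.sqrt_le_one.2 hq
  set r := q - (2 : ℝ) • P with hr
  have hr_abs : |r.1| + |r.2| ≤ 4 * weight P := by
    have h₁ : |r.1| ≤ |q.1| + |2 * P.1| := abs_sub _ _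
    have h₂ : |r.2| ≤ |q.2| + |2 * P.2| := abs_sub _ _
    rw [abs_mul, abs_two] at h₁ h₂
    rw [weight]
    nlinarith [sq_nonneg (|P.1| - 1), sq_nonneg (|P.2| - 1), sq_abs P.1, sq_abs P.2]
  have hpolar : binQuad α β γ (P - q) - binQuad α β γ P =
      α * (q.1 * r.1) + β * (q.1 * r.2) + β * (q.2 * r.1) + γ * (q.2 * r.2) := by
    simp only [binQuad, hr, Prod.fst_sub, Prod.snd_sub, Prod.smul_fst, Prod.smul_snd, smul_eq_mul]
    ring
  calc |binQuad α β γ (P - q) - binQuad α β γ P|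
      ≤ |α| * (|q.1| * |r.1|) + |β| * (|q.1| * |r.2|) + |β| * (|q.2| * |r.1|) +
          |γ| * (|q.2| * |r.2|) := by
        simp only [hpolar, ← abs_mul]
        exact (abs_add_le _ _).trans (add_le_add_left (abs_add_three _ _ _) _)
    _ ≤ c * (√(sqLen q) * |r.1|) + c * (√(sqLen q) * |r.2|) + c * (√(sqLen q) * |r.1|) +
          c * (√(sqLen q) * |r.2|) := by
        have hc : 0 ≤ c := (abs_nonneg α).trans hα
        gcongr
    _ = 2 * (c * √(sqLen q)) * (|r.1| + |r.2|) := by ring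
    _ ≤ 2 * (c * √(sqLen q)) * (4 * weight P) := by
        have hc : 0 ≤ c := (abs_nonneg α).trans hα
        gcongr
    _ = 8 * c * √(sqLen q) * weight P := by ring

lemma abs_kernelForm_sub_le {a : ℝ} (h0 : 0 ≤ a) (h1 : a ≤ 1 / 2) (P : ℝ × ℝ) {q : ℝ × ℝ}
    (hq : sqLen q ≤ 1) :
    |kernelForm a (P - q) - kernelForm a P| ≤ 112 * √(sqLen q) * weight P := by
  have hb : 1 / 2 ≤ 1 - a := by linarith
  have hb0 : 0 < 1 - a := by linarith
  have hb2 : 1 / 4 ≤ (1 - a) ^ 2 := by nlinarith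
  have hb3 : 1 / 8 ≤ (1 - a) ^ 3 := by nlinarith
  have h3 : √3 ≤ 2 := Real.sqrt_le_iff.2 (by norm_num)
  have hα : |(1 + 3 * a ^ 2) / (1 - a) ^ 3| ≤ 14 := by
    rw [abs_of_nonneg (by positivity), div_le_iff₀ (by positivity)]
    nlinarith
  have hβ : |-(√3 * a / (1 - a) ^ 2)| ≤ 14 := by
    rw [abs_neg, abs_of_nonneg (by positivity), div_le_iff₀ (by positivity)]
    nlinarith
  have hγ : |1 / (1 - a)| ≤ 14 := by
    rw [abs_of_nonneg (by positivity), div_le_iff₀ hb0]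
    linarith
  exact (abs_binQuad_sub_le hα hβ hγ P hq).trans_eq (by ring)

lemma det_kernelForm {a : ℝ} (ha : a < 1) :
    (1 + 3 * a ^ 2) / (1 - a) ^ 3 * (1 / (1 - a)) - (-(√3 * a / (1 - a) ^ 2)) ^ 2 =
      ((1 - a) ^ 4)⁻¹ := by
  have hb : 1 - a ≠ 0 := by linarith
  rw [neg_sq, div_pow, mul_pow, Real.sq_sqrt zero_le_three]
  field_simp
  ring

lemma sqLen_le_four_mul_kernelForm {a : ℝ} (h0 : 0 ≤ a) (h1 : a < 1) (z : ℝ × ℝ) :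
    sqLen z ≤ 4 * kernelForm a z := by
  have hb : 0 < 1 - a := by linarith
  have hlower : ((1 - a) ^ 4)⁻¹ / ((1 + 3 * a ^ 2) / (1 - a) ^ 3 + 1 / (1 - a)) * sqLen z ≤
      kernelForm a z := by
    rw [← det_kernelForm h1]
    exact det_div_trace_mul_sqLen_le_binQuad (by positivity)
      (by rw [det_kernelForm h1]; positivity) z
  have hcoeff : 1 / 4 ≤ ((1 - a) ^ 4)⁻¹ / ((1 + 3 * a ^ 2) / (1 - a) ^ 3 + 1 / (1 - a)) := by
    rw [show ((1 - a) ^ 4)⁻¹ / ((1 + 3 * a ^ 2) / (1 - a) ^ 3 + 1 / (1 - a)) =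
      1 / ((1 - a) * (1 + 3 * a ^ 2 + (1 - a) ^ 2)) by field_simp]
    refine one_div_le_one_div_of_le (by positivity) ?_
    calc (1 - a) * (1 + 3 * a ^ 2 + (1 - a) ^ 2) ≤ 1 * 4 := by
          gcongr
          · linarith
          · nlinarith
      _ = 4 := one_mul 4
  linarith [mul_le_mul_of_nonneg_right hcoeff (sqLen_nonneg z)]

lemma kernelForm_nonneg {a : ℝ} (h0 : 0 ≤ a) (h1 : a < 1) (z : ℝ × ℝ) : 0 ≤ kernelForm a z := by
  linarith [sqLen_nonneg z, sqLen_le_four_mul_kernelForm h0 h1 z]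

lemma exists_one_add_rpow_le_exp (M : ℝ) {ε : ℝ} (hε : 0 < ε) :
    ∃ C : ℝ, 0 < C ∧ ∀ s ≤ M, ∀ r : ℝ, 0 ≤ r → (1 + r) ^ s ≤ C * Real.exp (ε * r) := by
  set n := ⌈M⌉₊
  refine ⟨n.factorial / ε ^ n * Real.exp ε, by positivity, fun s hs r hr => ?_⟩
  have hexp := Real.pow_div_factorial_le_exp (ε * (1 + r)) (by positivity) n
  rw [mul_pow, div_le_iff₀ (by positivity)] at hexp
  calc (1 + r) ^ s ≤ (1 + r) ^ n := by
        rw [← Real.rpow_natCast]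
        exact Real.rpow_le_rpow_of_exponent_le (by linarith) (hs.trans (Nat.le_ceil M))
    _ ≤ Real.exp (ε * (1 + r)) * n.factorial / ε ^ n := by
        rw [le_div_iff₀ (by positivity), mul_comm]
        exact hexp
    _ = n.factorial / ε ^ n * Real.exp ε * Real.exp (ε * r) := by
        rw [mul_add, mul_one, Real.exp_add]
        ring

lemma exists_weight_rpow_mul_gaussKernel_le (M : ℝ) : ∃ C : ℝ, 0 < C ∧
    ∀ s ≤ M, ∀ a : ℝ, 0 ≤ a → a < 1 → ∀ z,
      weight z ^ s * gaussKernel a z ≤ C * kernelMajorant a z := by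
  obtain ⟨C, hC, hpoly⟩ := exists_one_add_rpow_le_exp M (ε := 1 / 32) (by norm_num)
  refine ⟨C, hC, fun s hs a h0 h1 z => ?_⟩
  have : 0 < 1 - a := by linarith
  have hweight : weight z ^ s ≤ C * Real.exp (kernelForm a z / 8) := by
    rw [weight_eq]
    refine (hpoly s hs _ (sqLen_nonneg z)).trans ?_
    gcongr
    linarith [sqLen_le_four_mul_kernelForm h0 h1 z]
  have hconst : (4 * Real.pi * (1 - a) ^ 2)⁻¹ ≤ ((1 - a) ^ 2)⁻¹ :=
    inv_anti₀ (by positivity)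
      (le_mul_of_one_le_left (by positivity) (by linarith [Real.pi_gt_three]))
  calc weight z ^ s * gaussKernel a z
      ≤ C * Real.exp (kernelForm a z / 8) *
          (((1 - a) ^ 2)⁻¹ * Real.exp (-kernelForm a z / 4)) := by
        rw [gaussKernel]
        gcongr
    _ = C * kernelMajorant a z := by
        rw [kernelMajorant, show -kernelForm a z / 8 =
          kernelForm a z / 8 + -kernelForm a z / 4 by ring, Real.exp_add]
        ring

lemma exists_weight_rpow_mul_gaussKernel_sub_le (M : ℝ) : ∃ C : ℝ, 0 < C ∧
    ∀ s : ℝ, 0 ≤ s → s ≤ M → ∀ a : ℝ, 0 ≤ a → a < 1 → ∀ P q,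
      weight P ^ s * gaussKernel a (P - q) ≤ C * (weight q ^ s * kernelMajorant a (P - q)) := by
  obtain ⟨C, hC, hK⟩ := exists_weight_rpow_mul_gaussKernel_le M
  refine ⟨2 ^ M * C, by positivity, fun s hs hsM a h0 h1 P q => ?_⟩
  have hwP := weight_pos P
  have hwq := weight_pos q
  have hwPq := weight_pos (P - q)
  have hweight : weight P ^ s ≤ 2 ^ M * weight (P - q) ^ s * weight q ^ s := by
    refine (Real.rpow_le_rpow hwP.le (weight_le_two_mul_weight_sub_mul_weight P q) hs).trans ?_
    rw [Real.mul_rpow (by positivity) hwq.le, Real.mul_rpow zero_le_two hwPq.le]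
    gcongr
    exact one_le_two
  have := gaussKernel_nonneg a (P - q)
  calc weight P ^ s * gaussKernel a (P - q)
      ≤ 2 ^ M * weight (P - q) ^ s * weight q ^ s * gaussKernel a (P - q) := by gcongr
    _ = 2 ^ M * weight q ^ s * (weight (P - q) ^ s * gaussKernel a (P - q)) := by ring
    _ ≤ 2 ^ M * weight q ^ s * (C * kernelMajorant a (P - q)) :=
        mul_le_mul_of_nonneg_left (hK s hsM a h0 h1 _) (by positivity)
    _ = 2 ^ M * C * (weight q ^ s * kernelMajorant a (P - q)) := by ring

lemma abs_exp_sub_exp_le (x y : ℝ) :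
    |Real.exp x - Real.exp y| ≤ |x - y| * (Real.exp x + Real.exp y) := by
  wlog h : y ≤ x generalizing x y
  · rw [abs_sub_comm, abs_sub_comm x, add_comm]
    exact this y x (le_of_not_ge h)
  rw [abs_of_nonneg (sub_nonneg.2 (Real.exp_le_exp.2 h)), abs_of_nonneg (sub_nonneg.2 h)]
  have hstep : Real.exp x * (1 - (x - y)) ≤ Real.exp y := by
    calc Real.exp x * (1 - (x - y)) ≤ Real.exp x * Real.exp (-(x - y)) := by
          gcongr
          exact Real.one_sub_le_exp_neg _
      _ = Real.exp y := by rw [← Real.exp_add]; ring_nf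
  nlinarith [mul_nonneg (sub_nonneg.2 h) (Real.exp_nonneg y)]

lemma abs_gaussKernel_sub_le {a : ℝ} (h0 : 0 ≤ a) (h1 : a ≤ 1 / 2) (P : ℝ × ℝ) {q : ℝ × ℝ}
    (hq : sqLen q ≤ 1) :
    |gaussKernel a (P - q) - gaussKernel a P| ≤
      28 * √(sqLen q) * weight P * (gaussKernel a (P - q) + gaussKernel a P) := by
  have hb : 0 < 1 - a := by linarith
  have hform : |-kernelForm a (P - q) / 4 - -kernelForm a P / 4| ≤ 28 * √(sqLen q) * weight P := by
    rw [← sub_div, ← neg_sub', neg_div, abs_neg, abs_div, abs_of_pos (zero_lt_four' ℝ)]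
    linarith [abs_kernelForm_sub_le h0 h1 P hq]
  rw [gaussKernel, gaussKernel, ← mul_sub, ← mul_add, abs_mul, abs_of_pos (by positivity)]
  rw [mul_left_comm]
  gcongr
  refine (abs_exp_sub_exp_le _ _).trans ?_
  gcongr

lemma weight_rpow_le_two_rpow_mul {r s M : ℝ} (hsr : s ≤ r) (hM : r - s ≤ M) {q : ℝ × ℝ}
    (hq : sqLen q ≤ 1) : weight q ^ r ≤ 2 ^ M * weight q ^ s := by
  have hwq := weight_pos q
  rw [← sub_add_cancel r s, Real.rpow_add hwq]
  gcongr
  exact (Real.rpow_le_rpow hwq.le (by linarith [weight_eq q]) (by linarith)).trans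
    (Real.rpow_le_rpow_of_exponent_le one_le_two hM)

lemma exists_weight_rpow_mul_abs_gaussKernel_sub_le_of_sqLen_le_one (M : ℝ) : ∃ C : ℝ, 0 < C ∧
    ∀ s t : ℝ, 0 ≤ t → t ≤ 1 / 2 → t ≤ s → s ≤ M → ∀ a : ℝ, 0 ≤ a → a ≤ 1 / 2 →
    ∀ P q, sqLen q ≤ 1 →
      weight P ^ s * |gaussKernel a (P - q) - gaussKernel a P| ≤
        C * (sqLen q ^ t * (weight q ^ (s - t) * kernelMajorant a (P - q) +
          kernelMajorant a P)) := by
  obtain ⟨C, hC, hK⟩ := exists_weight_rpow_mul_gaussKernel_sub_le (M + 1)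
  refine ⟨28 * C * 2 ^ (M + 1), by positivity, fun s t ht0 ht hts hsM a h0 h1 P q hq => ?_⟩
  have hwP := weight_pos P
  have hKq := hK (s + 1) (by linarith) (by linarith) a h0 (by linarith) P q
  have hK0 := hK (s + 1) (by linarith) (by linarith) a h0 (by linarith) P 0
  rw [sub_zero, show weight 0 = 1 by simp [weight], Real.one_rpow, one_mul] at hK0
  have hsqrt : √(sqLen q) ≤ sqLen q ^ t := by
    rw [Real.sqrt_eq_rpow]
    exact Real.rpow_le_rpow_of_exponent_ge_of_imp (sqLen_nonneg q) hq ht fun _ h => by linarith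
  have hweight : weight q ^ (s + 1) ≤ 2 ^ (M + 1) * weight q ^ (s - t) :=
    weight_rpow_le_two_rpow_mul (by linarith) (by linarith) hq
  have hone : (1 : ℝ) ≤ 2 ^ (M + 1) := Real.one_le_rpow one_le_two (by linarith)
  have hH := kernelMajorant_nonneg a
  calc weight P ^ s * |gaussKernel a (P - q) - gaussKernel a P|
      ≤ weight P ^ s * (28 * √(sqLen q) * weight P *
          (gaussKernel a (P - q) + gaussKernel a P)) := by
        gcongr
        exact abs_gaussKernel_sub_le h0 h1 P hq
    _ = 28 * √(sqLen q) * (weight P ^ (s + 1) * gaussKernel a (P - q) +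
          weight P ^ (s + 1) * gaussKernel a P) := by
        rw [Real.rpow_add_one hwP.ne']
        ring
    _ ≤ 28 * sqLen q ^ t * (C * (2 ^ (M + 1) * weight q ^ (s - t) * kernelMajorant a (P - q)) +
          C * (2 ^ (M + 1) * kernelMajorant a P)) := by
        have := hH (P - q)
        refine mul_le_mul (by gcongr) (add_le_add (hKq.trans (by gcongr)) (hK0.trans ?_)) ?_ ?_
        · gcongr
          exact le_mul_of_one_le_left (hH P) hone
        · have := gaussKernel_nonneg a (P - q)
          have := gaussKernel_nonneg a P
          positivity
        · have := sqLen_nonneg q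
          positivity
    _ = _ := by ring

lemma exists_weight_rpow_mul_abs_gaussKernel_sub_le_of_one_le_sqLen (M : ℝ) : ∃ C : ℝ, 0 < C ∧
    ∀ s t : ℝ, 0 ≤ t → t ≤ 1 → t ≤ s → s ≤ M → ∀ a : ℝ, 0 ≤ a → a < 1 →
    ∀ P q, 1 ≤ sqLen q →
      weight P ^ s * |gaussKernel a (P - q) - gaussKernel a P| ≤
        C * (sqLen q ^ t * (weight q ^ (s - t) * kernelMajorant a (P - q) +
          kernelMajorant a P)) := by
  obtain ⟨C, hC, hK⟩ := exists_weight_rpow_mul_gaussKernel_sub_le M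
  refine ⟨2 * C, by positivity, fun s t ht0 ht hts hsM a h0 h1 P q hq => ?_⟩
  have hwq := weight_pos q
  have hKq := hK s (by linarith) hsM a h0 h1 P q
  have hK0 := hK s (by linarith) hsM a h0 h1 P 0
  rw [sub_zero, show weight 0 = 1 by simp [weight], Real.one_rpow, one_mul] at hK0
  have hone : 1 ≤ sqLen q ^ t := Real.one_le_rpow hq ht0
  have hweight : weight q ^ s ≤ 2 * sqLen q ^ t * weight q ^ (s - t) := by
    conv_lhs => rw [← add_sub_cancel t s, Real.rpow_add hwq]
    gcongr
    refine (Real.rpow_le_rpow hwq.le (show weight q ≤ 2 * sqLen q by linarith [weight_eq q])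
      ht0).trans ?_
    rw [Real.mul_rpow zero_le_two (sqLen_nonneg q)]
    gcongr
    exact Real.rpow_le_self_of_one_le one_le_two ht
  have hHq := kernelMajorant_nonneg a (P - q)
  have hHP := kernelMajorant_nonneg a P
  have hwP := weight_pos P
  calc weight P ^ s * |gaussKernel a (P - q) - gaussKernel a P|
      ≤ weight P ^ s * (gaussKernel a (P - q) + gaussKernel a P) := by
        gcongr
        refine (abs_sub _ _).trans_eq ?_
        rw [abs_of_nonneg (gaussKernel_nonneg _ _), abs_of_nonneg (gaussKernel_nonneg _ _)]
    _ ≤ C * (weight q ^ s * kernelMajorant a (P - q)) + C * kernelMajorant a P := by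
        rw [mul_add]
        exact add_le_add hKq hK0
    _ ≤ C * (2 * sqLen q ^ t * weight q ^ (s - t) * kernelMajorant a (P - q)) +
          C * (2 * sqLen q ^ t * kernelMajorant a P) := by
        gcongr
        exact le_mul_of_one_le_left hHP (by linarith)
    _ = _ := by ring

lemma exists_weight_rpow_mul_abs_gaussKernel_sub_le (M : ℝ) : ∃ C : ℝ, 0 < C ∧
    ∀ s t : ℝ, 0 ≤ t → t ≤ 1 / 2 → t ≤ s → s ≤ M → ∀ a : ℝ, 0 ≤ a → a ≤ 1 / 2 → ∀ P q,
      weight P ^ s * |gaussKernel a (P - q) - gaussKernel a P| ≤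
        C * (sqLen q ^ t * (weight q ^ (s - t) * kernelMajorant a (P - q) +
          kernelMajorant a P)) := by
  obtain ⟨C₁, hC₁, hsmall⟩ := exists_weight_rpow_mul_abs_gaussKernel_sub_le_of_sqLen_le_one M
  obtain ⟨C₂, -, hlarge⟩ := exists_weight_rpow_mul_abs_gaussKernel_sub_le_of_one_le_sqLen M
  refine ⟨max C₁ C₂, lt_max_of_lt_left hC₁, fun s t ht0 ht hts hsM a h0 h1 P q => ?_⟩
  have hnonneg : 0 ≤ sqLen q ^ t * (weight q ^ (s - t) * kernelMajorant a (P - q) +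
      kernelMajorant a P) := by
    have := sqLen_nonneg q
    have := weight_pos q
    have := kernelMajorant_nonneg a P
    have := kernelMajorant_nonneg a (P - q)
    positivity
  rcases le_total (sqLen q) 1 with hq | hq
  · exact (hsmall s t ht0 ht hts hsM a h0 h1 P q hq).trans
      (mul_le_mul_of_nonneg_right (le_max_left _ _) hnonneg)
  · exact (hlarge s t ht0 (by linarith) hts hsM a h0 (by linarith) P q hq).trans
      (mul_le_mul_of_nonneg_right (le_max_right _ _) hnonneg)

/-! ### Integrals of the majorant -/

lemma sq_add_sq_matrix_mul_le (α β γ δ x y : ℝ) :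
    (α * x + β * y) ^ 2 + (γ * x + δ * y) ^ 2 ≤
      (α ^ 2 + β ^ 2 + γ ^ 2 + δ ^ 2) * (x ^ 2 + y ^ 2) := by
  nlinarith [sq_nonneg (α * y - β * x), sq_nonneg (γ * y - δ * x)]

lemma sqLen_charTranspose_le {τ : ℝ} (hτ : 0 ≤ τ) (p : ℝ × ℝ) :
    sqLen (charTranspose τ p) ≤ 4 * Real.exp (-τ) * sqLen p := by
  set e := Real.exp (-τ / 2) with he
  have hsq : Real.exp (-τ) = e ^ 2 := by rw [he, ← Real.exp_nat_mul]; ring_nf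
  have hcube : Real.exp (-(3 * τ) / 2) = e ^ 3 := by rw [he, ← Real.exp_nat_mul]; ring_nf
  have he1 : e ^ 2 ≤ 1 := by rw [← hsq]; exact Real.exp_le_one_iff.2 (by linarith)
  have h3 : √3 ^ 2 = 3 := Real.sq_sqrt zero_le_three
  have hfrobenius : ((3 * e - e ^ 3) / 2) ^ 2 + (√3 * (e - e ^ 3) / 2) ^ 2 +
      (-√3 * (e - e ^ 3) / 2) ^ 2 + ((3 * e ^ 3 - e) / 2) ^ 2 =
        e ^ 2 * (4 - 6 * e ^ 2 + 4 * (e ^ 2) ^ 2) := by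
    linear_combination (e - e ^ 3) ^ 2 / 2 * h3
  simp only [sqLen, charTranspose, Matrix.toLin_finTwoProd_apply, hcube, ← he]
  refine (sq_add_sq_matrix_mul_le _ _ _ _ _ _).trans ?_
  rw [hfrobenius, hsq, mul_comm 4 (e ^ 2)]
  have hfactor : 4 - 6 * e ^ 2 + 4 * (e ^ 2) ^ 2 ≤ 4 := by nlinarith [sq_nonneg e]
  gcongr

lemma lintegral_comp_linearMap {E : Type*} [NormedAddCommGroup E] [NormedSpace ℝ E]
    [FiniteDimensional ℝ E] [MeasurableSpace E] [BorelSpace E] (μ : Measure E) [μ.IsAddHaarMeasure]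
    {L : E →ₗ[ℝ] E} (hL : LinearMap.det L ≠ 0) {F : E → ℝ≥0∞} (hF : Measurable F) :
    ∫⁻ x, F (L x) ∂μ = ENNReal.ofReal |(LinearMap.det L)⁻¹| * ∫⁻ x, F x ∂μ := by
  rw [← lintegral_map hF L.continuous_of_finiteDimensional.measurable,
    Measure.map_linearMap_addHaar_eq_smul_addHaar μ hL, lintegral_smul_measure, smul_eq_mul]

lemma kernelMajorant_eq_exp_neg_binQuad (a : ℝ) (z : ℝ × ℝ) :
    kernelMajorant a z = ((1 - a) ^ 2)⁻¹ * Real.exp (-binQuad ((1 + 3 * a ^ 2) / (1 - a) ^ 3 / 8)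
      (-(√3 * a / (1 - a) ^ 2) / 8) (1 / (1 - a) / 8) z) := by
  rw [kernelMajorant, kernelForm, binQuad, binQuad]
  ring_nf

lemma lintegral_kernelMajorant {a : ℝ} (ha : a < 1) :
    ∫⁻ z, ENNReal.ofReal (kernelMajorant a z) = ENNReal.ofReal (8 * Real.pi) := by
  have hb : 0 < 1 - a := sub_pos.2 ha
  have hdet : (1 + 3 * a ^ 2) / (1 - a) ^ 3 / 8 * (1 / (1 - a) / 8) -
      (-(√3 * a / (1 - a) ^ 2) / 8) ^ 2 = (((1 - a) ^ 2)⁻¹ / 8) ^ 2 := by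
    linear_combination (norm := (field_simp; ring)) 1 / 64 * det_kernelForm ha
  have hα : 0 < (1 + 3 * a ^ 2) / (1 - a) ^ 3 / 8 := by positivity
  have hD : 0 < (1 + 3 * a ^ 2) / (1 - a) ^ 3 / 8 * (1 / (1 - a) / 8) -
      (-(√3 * a / (1 - a) ^ 2) / 8) ^ 2 := by rw [hdet]; positivity
  rw [← ofReal_integral_eq_lintegral_ofReal _ (ae_of_all _ (kernelMajorant_nonneg a))]
  · simp only [kernelMajorant_eq_exp_neg_binQuad]
    rw [integral_const_mul, integral_exp_neg_binQuad hα hD, hdet, Real.sqrt_sq (by positivity)]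
    field_simp
  · simp only [funext (kernelMajorant_eq_exp_neg_binQuad a)]
    exact (integrable_exp_neg_binQuad hα hD).const_mul _

lemma lintegral_kernelMajorant_sub {a : ℝ} (ha : a < 1) (q : ℝ × ℝ) :
    ∫⁻ P, ENNReal.ofReal (kernelMajorant a (P - q)) = ENNReal.ofReal (8 * Real.pi) := by
  rw [lintegral_sub_right_eq_self (fun z => ENNReal.ofReal (kernelMajorant a z)),
    lintegral_kernelMajorant ha]

lemma lintegral_kernelMajorant_sub_charTranspose {a : ℝ} (ha : a < 1) (τ : ℝ) (P : ℝ × ℝ) :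
    ∫⁻ p, ENNReal.ofReal (kernelMajorant a (P - charTranspose τ p)) =
      ENNReal.ofReal ((Real.exp (-τ) ^ 2)⁻¹ * (8 * Real.pi)) := by
  have hdet : LinearMap.det (charTranspose τ) ≠ 0 := by
    rw [det_charTranspose]
    positivity
  rw [lintegral_comp_linearMap volume hdet
      (F := fun q => ENNReal.ofReal (kernelMajorant a (P - q))) (by fun_prop),
    lintegral_sub_left_eq_self (fun z => ENNReal.ofReal (kernelMajorant a z)),
    lintegral_kernelMajorant ha, det_charTranspose, abs_of_pos (by positivity),
    ← ENNReal.ofReal_mul (by positivity)]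

lemma kernelMajorant_le {a : ℝ} (h0 : 0 ≤ a) (h1 : a < 1) (z : ℝ × ℝ) :
    kernelMajorant a z ≤ ((1 - a) ^ 2)⁻¹ := by
  refine mul_le_of_le_one_right (by positivity) (Real.exp_le_one_iff.2 ?_)
  linarith [kernelForm_nonneg h0 h1 z]

lemma integrable_inv_weight_sq : Integrable fun p => (weight p)⁻¹ ^ 2 := by
  have hcont : Continuous fun p => (weight p)⁻¹ ^ 2 :=
    (continuous_weight.inv₀ fun p => (weight_pos p).ne').pow 2
  refine (integrable_inv_one_add_sq.mul_prod integrable_inv_one_add_sq).mono'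
    hcont.aestronglyMeasurable (ae_of_all _ fun p => ?_)
  have := weight_pos p
  rw [Real.norm_of_nonneg (by positivity), inv_pow, ← mul_inv]
  refine inv_anti₀ (by positivity) ?_
  rw [weight]
  nlinarith [sq_nonneg p.1, sq_nonneg p.2, mul_nonneg (sq_nonneg p.1) (sq_nonneg p.2)]

/-! ### The Schur test -/

section SchurTest

variable {α β : Type*} [MeasurableSpace α] [MeasurableSpace β] {μ : Measure α} {ν : Measure β}

lemma eLpNorm_two_sq (f : α → ℝ≥0∞) : eLpNorm f 2 μ ^ 2 = ∫⁻ x, f x ^ 2 ∂μ := by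
  simpa using eLpNorm_nnreal_pow_eq_lintegral (f := f) (μ := μ) (p := 2) two_ne_zero

lemma lintegral_weighted_mul_sq_le {k s g : β → ℝ≥0∞} (hk : AEMeasurable k ν)
    (hs : AEMeasurable s ν) (hg : AEMeasurable g ν) :
    (∫⁻ y, k y * (s y * g y) ∂ν) ^ 2 ≤ (∫⁻ y, k y * s y ^ 2 ∂ν) * ∫⁻ y, k y * g y ^ 2 ∂ν := by
  have hsqrt (c : ℝ≥0∞) : c ^ (1 / 2 : ℝ) * c ^ (1 / 2 : ℝ) = c := by
    rw [← ENNReal.rpow_add_of_nonneg _ _ (by norm_num) (by norm_num)]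
    norm_num
  have hsq (c d : ℝ≥0∞) : (c ^ (1 / 2 : ℝ) * d) ^ (2 : ℝ) = c * d ^ 2 := by
    rw [ENNReal.rpow_two, mul_pow, sq (c ^ (1 / 2 : ℝ)), hsqrt]
  have hsplit (c d e : ℝ≥0∞) : c ^ (1 / 2 : ℝ) * d * (c ^ (1 / 2 : ℝ) * e) = c * (d * e) := by
    rw [mul_mul_mul_comm, hsqrt]
  have hHolder := ENNReal.lintegral_mul_le_Lp_mul_Lq ν Real.HolderConjugate.two_two
    ((hk.pow_const (1 / 2 : ℝ)).mul hs) ((hk.pow_const (1 / 2 : ℝ)).mul hg)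
  simp only [Pi.mul_apply, hsq, hsplit] at hHolder
  calc (∫⁻ y, k y * (s y * g y) ∂ν) ^ 2
      ≤ ((∫⁻ y, k y * s y ^ 2 ∂ν) ^ (1 / 2 : ℝ) *
          (∫⁻ y, k y * g y ^ 2 ∂ν) ^ (1 / 2 : ℝ)) ^ 2 := by gcongr
    _ = _ := by rw [mul_pow, sq, hsqrt, sq, hsqrt]

lemma eLpNorm_lintegral_mul_le [SFinite μ] [SFinite ν] {k : α → β → ℝ≥0∞}
    (hk : Measurable (Function.uncurry k)) {s g : β → ℝ≥0∞} (hs : AEMeasurable s ν)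
    (hg : AEMeasurable g ν) {A B R : ℝ≥0∞} (hA : ∀ x, ∫⁻ y, k x y * s y ^ 2 ∂ν ≤ A)
    (hB : ∀ y, ∫⁻ x, k x y ∂μ ≤ B) (hAB : A * B ≤ R ^ 2) :
    eLpNorm (fun x => ∫⁻ y, k x y * (s y * g y) ∂ν) 2 μ ≤ R * eLpNorm g 2 ν := by
  have hkg : AEMeasurable (Function.uncurry fun x y => k x y * g y ^ 2) (μ.prod ν) :=
    hk.aemeasurable.mul (hg.comp_snd.pow_const 2)
  have hinner : AEMeasurable (fun x => ∫⁻ y, k x y * g y ^ 2 ∂ν) μ := hkg.lintegral_prod_right'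
  rw [← ENNReal.pow_le_pow_left_iff two_ne_zero]
  calc eLpNorm (fun x => ∫⁻ y, k x y * (s y * g y) ∂ν) 2 μ ^ 2
      = ∫⁻ x, (∫⁻ y, k x y * (s y * g y) ∂ν) ^ 2 ∂μ := eLpNorm_two_sq _
    _ ≤ ∫⁻ x, A * ∫⁻ y, k x y * g y ^ 2 ∂ν ∂μ := by
        refine lintegral_mono fun x => ?_
        refine (lintegral_weighted_mul_sq_le hk.of_uncurry_left.aemeasurable hs hg).trans ?_
        gcongr
        exact hA x
    _ = A * ∫⁻ y, (∫⁻ x, k x y ∂μ) * g y ^ 2 ∂ν := by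
        rw [lintegral_const_mul'' A hinner, lintegral_lintegral_swap hkg]
        exact congrArg (A * ·) (lintegral_congr fun y => lintegral_mul_const _ hk.of_uncurry_right)
    _ ≤ A * ∫⁻ y, B * g y ^ 2 ∂ν := by
        gcongr with y
        exact hB y
    _ = A * B * eLpNorm g 2 ν ^ 2 := by
        rw [lintegral_const_mul'' _ (hg.pow_const 2), eLpNorm_two_sq, mul_assoc]
    _ ≤ (R * eLpNorm g 2 ν) ^ 2 := by
        rw [mul_pow]
        gcongr

end SchurTest

/-! ### Weighted operator bounds -/

/-- The constant of the Schur test for kernels dominated by `kernelMajorant`. -/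
noncomputable def schurConst : ℝ := 8 * Real.pi + ∫ p, (weight p)⁻¹ ^ 2

lemma integral_inv_weight_sq_nonneg : 0 ≤ ∫ p, (weight p)⁻¹ ^ 2 :=
  integral_nonneg fun _ => sq_nonneg _

lemma lintegral_inv_weight_sq :
    ∫⁻ p, ENNReal.ofReal ((weight p)⁻¹ ^ 2) = ENNReal.ofReal (∫ p, (weight p)⁻¹ ^ 2) :=
  (ofReal_integral_eq_lintegral_ofReal integrable_inv_weight_sq
    (ae_of_all _ fun _ => sq_nonneg _)).symm

lemma schurConst_pos : 0 < schurConst :=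
  add_pos_of_pos_of_nonneg (by positivity) integral_inv_weight_sq_nonneg

lemma schurConst_mul_le {F : ℝ} (hF : 0 ≤ F) :
    ENNReal.ofReal (F ^ 2 * schurConst) * ENNReal.ofReal (8 * Real.pi) ≤
      ENNReal.ofReal (F * schurConst) ^ 2 := by
  have hπ : 8 * Real.pi ≤ schurConst := le_add_of_nonneg_right integral_inv_weight_sq_nonneg
  have hc := schurConst_pos
  rw [← ENNReal.ofReal_mul (by positivity), ← ENNReal.ofReal_pow (by positivity)]
  exact ENNReal.ofReal_le_ofReal
    ((mul_le_mul_of_nonneg_left hπ (by positivity)).trans_eq (by ring))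

lemma enorm_sq_le_ofReal {x c : ℝ} (h : x ^ 2 ≤ c) : ‖x‖ₑ ^ 2 ≤ ENNReal.ofReal c := by
  rw [← enorm_pow, Real.enorm_of_nonneg (sq_nonneg x)]
  exact ENNReal.ofReal_le_ofReal h

section Schur

variable {τ F : ℝ} {s : ℝ × ℝ → ℝ} {g : ℝ × ℝ → ℝ≥0∞}

lemma sq_one_sub_exp_mul_kernelMajorant_le_one (hτ : 0 < τ) (z : ℝ × ℝ) :
    (1 - Real.exp (-τ)) ^ 2 * kernelMajorant (Real.exp (-τ)) z ≤ 1 := by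
  have hb := one_sub_exp_neg_pos hτ
  rw [← le_inv_mul_iff₀ (by positivity), mul_one]
  exact kernelMajorant_le (Real.exp_nonneg _) (by linarith) z

lemma eLpNorm_lintegral_kernelMajorant_sub_mul_le (hτ : 0 < τ) (hF : 0 ≤ F) (hs : Measurable s)
    (hg : AEMeasurable g) (hsF : ∀ p, s p ^ 2 ≤
      F ^ 2 * (Real.exp (-τ) ^ 2 + (1 - Real.exp (-τ)) ^ 2 * (weight p)⁻¹ ^ 2)) :
    eLpNorm (fun P => ∫⁻ p, ENNReal.ofReal (kernelMajorant (Real.exp (-τ))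
      (P - charTranspose τ p)) * (‖s p‖ₑ * g p)) 2 ≤
        ENNReal.ofReal (F * schurConst) * eLpNorm g 2 := by
  have ha : Real.exp (-τ) < 1 := by linarith [one_sub_exp_neg_pos hτ]
  refine eLpNorm_lintegral_mul_le (by fun_prop) (by fun_prop) hg (fun P => ?_)
    (fun p => (lintegral_kernelMajorant_sub ha _).le) (schurConst_mul_le hF)
  set H := fun p => kernelMajorant (Real.exp (-τ)) (P - charTranspose τ p) with hH
  have hH0 (p : ℝ × ℝ) : 0 ≤ H p := kernelMajorant_nonneg _ _
  calc ∫⁻ p, ENNReal.ofReal (H p) * ‖s p‖ₑ ^ 2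
      ≤ ∫⁻ p, ENNReal.ofReal (F ^ 2) * (ENNReal.ofReal (Real.exp (-τ) ^ 2) * ENNReal.ofReal (H p) +
          ENNReal.ofReal ((weight p)⁻¹ ^ 2)) := by
        refine lintegral_mono fun p => ?_
        refine (mul_le_mul_right (enorm_sq_le_ofReal (hsF p)) _).trans ?_
        rw [← ENNReal.ofReal_mul (hH0 p), ← ENNReal.ofReal_mul (by positivity),
          ← ENNReal.ofReal_add (mul_nonneg (by positivity) (hH0 p)) (by positivity),
          ← ENNReal.ofReal_mul (by positivity)]
        refine ENNReal.ofReal_le_ofReal ?_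
        have := mul_le_mul_of_nonneg_left
          (sq_one_sub_exp_mul_kernelMajorant_le_one hτ (P - charTranspose τ p))
          (show 0 ≤ F ^ 2 * (weight p)⁻¹ ^ 2 by positivity)
        simp only [hH]
        linarith
    _ = ENNReal.ofReal (F ^ 2 * schurConst) := by
        rw [lintegral_const_mul' _ _ ENNReal.ofReal_ne_top, lintegral_add_left (by fun_prop),
          lintegral_const_mul' _ _ ENNReal.ofReal_ne_top,
          lintegral_kernelMajorant_sub_charTranspose ha, lintegral_inv_weight_sq,
          ← ENNReal.ofReal_mul (by positivity), mul_inv_cancel_left₀ (by positivity),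
          ← ENNReal.ofReal_add (by positivity) integral_inv_weight_sq_nonneg,
          ← ENNReal.ofReal_mul (by positivity), schurConst]

lemma eLpNorm_lintegral_kernelMajorant_mul_le (hτ : 0 < τ) (hF : 0 ≤ F) (hs : Measurable s)
    (hg : AEMeasurable g)
    (hsF : ∀ p, s p ^ 2 ≤ F ^ 2 * ((1 - Real.exp (-τ)) ^ 2 * (weight p)⁻¹ ^ 2)) :
    eLpNorm (fun P => ∫⁻ p, ENNReal.ofReal (kernelMajorant (Real.exp (-τ)) P) *
      (‖s p‖ₑ * g p)) 2 ≤ ENNReal.ofReal (F * schurConst) * eLpNorm g 2 := by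
  have ha : Real.exp (-τ) < 1 := by linarith [one_sub_exp_neg_pos hτ]
  refine eLpNorm_lintegral_mul_le (by fun_prop) (by fun_prop) hg (fun P => ?_)
    (fun _ => (lintegral_kernelMajorant ha).le) (schurConst_mul_le hF)
  calc ∫⁻ p, ENNReal.ofReal (kernelMajorant (Real.exp (-τ)) P) * ‖s p‖ₑ ^ 2
      ≤ ∫⁻ p, ENNReal.ofReal (F ^ 2) * ENNReal.ofReal ((weight p)⁻¹ ^ 2) := by
        refine lintegral_mono fun p => ?_
        refine (mul_le_mul_right (enorm_sq_le_ofReal (hsF p)) _).trans ?_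
        rw [← ENNReal.ofReal_mul (kernelMajorant_nonneg _ _), ← ENNReal.ofReal_mul (by positivity)]
        refine ENNReal.ofReal_le_ofReal ?_
        have := mul_le_mul_of_nonneg_left (sq_one_sub_exp_mul_kernelMajorant_le_one hτ P)
          (show 0 ≤ F ^ 2 * (weight p)⁻¹ ^ 2 by positivity)
        linarith
    _ ≤ ENNReal.ofReal (F ^ 2 * schurConst) := by
        rw [lintegral_const_mul' _ _ ENNReal.ofReal_ne_top, lintegral_inv_weight_sq,
          ← ENNReal.ofReal_mul (by positivity)]
        gcongr
        exact le_add_of_nonneg_left (by positivity)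

end Schur

lemma wnorm_eq {E : Type*} [NormedAddCommGroup E] (m : ℝ) (f : ℝ × ℝ → E) :
    wnorm m f = eLpNorm (fun p => ENNReal.ofReal (weight p ^ (m / 2)) * ‖f p‖ₑ) 2 := by
  rw [wnorm, ← eLpNorm_enorm]
  congr with p
  rw [enorm_mul, enorm_norm, ← weight,
    Real.enorm_of_nonneg (Real.rpow_nonneg (weight_pos p).le _)]

lemma ofReal_mul_enorm_integral_le {w : ℝ} (hw : 0 ≤ w) {f h₁ h₂ : ℝ × ℝ → ℝ}
    {k₁ k₂ : ℝ × ℝ → ℝ≥0∞} (hk₁ : AEMeasurable k₁)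
    (hf : ∀ p, w * |f p| ≤ h₁ p + h₂ p) (hh₁ : ∀ p, ENNReal.ofReal (h₁ p) ≤ k₁ p)
    (hh₂ : ∀ p, ENNReal.ofReal (h₂ p) ≤ k₂ p) :
    ENNReal.ofReal w * ‖∫ p, f p‖ₑ ≤ (∫⁻ p, k₁ p) + ∫⁻ p, k₂ p := by
  calc ENNReal.ofReal w * ‖∫ p, f p‖ₑ
      ≤ ∫⁻ p, ENNReal.ofReal w * ‖f p‖ₑ := by
        rw [lintegral_const_mul' _ _ ENNReal.ofReal_ne_top]
        gcongr
        exact enorm_integral_le_lintegral_enorm f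
    _ ≤ ∫⁻ p, (k₁ p + k₂ p) := lintegral_mono fun p => by
        rw [Real.enorm_eq_ofReal_abs, ← ENNReal.ofReal_mul hw]
        exact (ENNReal.ofReal_le_ofReal (hf p)).trans
          (ENNReal.ofReal_add_le.trans (add_le_add (hh₁ p) (hh₂ p)))
    _ = _ := lintegral_add_left' hk₁ _

lemma ofReal_mul_mul_mul_abs_le {w r : ℝ} (hw : 0 ≤ w) (hr : 0 ≤ r) (s x : ℝ) :
    ENNReal.ofReal (s * r * w * |x|) ≤ ENNReal.ofReal r * (‖s‖ₑ * (ENNReal.ofReal w * ‖x‖ₑ)) := by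
  rw [Real.enorm_eq_ofReal_abs, Real.enorm_eq_ofReal_abs, ← ENNReal.ofReal_mul hw,
    ← ENNReal.ofReal_mul (abs_nonneg s), ← ENNReal.ofReal_mul hr]
  refine ENNReal.ofReal_le_ofReal ?_
  have := mul_le_mul_of_nonneg_right (le_abs_self s)
    (mul_nonneg (mul_nonneg hr hw) (abs_nonneg x))
  linarith

lemma aemeasurable_lintegral_mul {h : ℝ × ℝ → ℝ × ℝ → ℝ≥0∞} {k : ℝ × ℝ → ℝ≥0∞}
    (hh : Measurable (Function.uncurry h)) (hk : AEMeasurable k) :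
    AEMeasurable fun P => ∫⁻ p, h P p * k p :=
  AEMeasurable.lintegral_prod_right' (f := fun q => h q.1 q.2 * k q.2)
    (hh.aemeasurable.mul hk.comp_snd)

lemma wnorm_integral_mul_le {τ F m : ℝ} (hτ : 0 < τ) (hF : 0 ≤ F)
    {κ : ℝ × ℝ → ℝ × ℝ → ℝ} {s₁ s₂ v : ℝ × ℝ → ℝ} (hs₁ : Measurable s₁) (hs₂ : Measurable s₂)
    (hv : AEMeasurable v)
    (hs₁F : ∀ p, s₁ p ^ 2 ≤
      F ^ 2 * (Real.exp (-τ) ^ 2 + (1 - Real.exp (-τ)) ^ 2 * (weight p)⁻¹ ^ 2))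
    (hs₂F : ∀ p, s₂ p ^ 2 ≤ F ^ 2 * ((1 - Real.exp (-τ)) ^ 2 * (weight p)⁻¹ ^ 2))
    (hκ : ∀ P p, weight P ^ (m / 2) * |κ P p| ≤
      (s₁ p * kernelMajorant (Real.exp (-τ)) (P - charTranspose τ p) +
        s₂ p * kernelMajorant (Real.exp (-τ)) P) * weight p ^ (m / 2)) :
    wnorm m (fun P => ∫ p, κ P p * v p) ≤
      ENNReal.ofReal (2 * F * schurConst) * wnorm m v := by
  set H := kernelMajorant (Real.exp (-τ))
  set g := fun p => ENNReal.ofReal (weight p ^ (m / 2)) * ‖v p‖ₑ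
  have hgm : AEMeasurable g := by fun_prop
  have hpointwise (P : ℝ × ℝ) : ENNReal.ofReal (weight P ^ (m / 2)) * ‖∫ p, κ P p * v p‖ₑ ≤
      (∫⁻ p, ENNReal.ofReal (H (P - charTranspose τ p)) * (‖s₁ p‖ₑ * g p)) +
        ∫⁻ p, ENNReal.ofReal (H P) * (‖s₂ p‖ₑ * g p) := by
    refine ofReal_mul_enorm_integral_le (Real.rpow_nonneg (weight_pos P).le _) (by fun_prop)
      (fun p => ?_)
      (fun p => ofReal_mul_mul_mul_abs_le (Real.rpow_nonneg (weight_pos p).le _)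
        (kernelMajorant_nonneg _ _) _ _)
      (fun p => ofReal_mul_mul_mul_abs_le (Real.rpow_nonneg (weight_pos p).le _)
        (kernelMajorant_nonneg _ _) _ _)
    rw [abs_mul, ← mul_assoc]
    exact (mul_le_mul_of_nonneg_right (hκ P p) (abs_nonneg _)).trans_eq (by ring)
  have hm₁ : AEMeasurable fun P => ∫⁻ p, ENNReal.ofReal (H (P - charTranspose τ p)) *
      (‖s₁ p‖ₑ * g p) :=
    aemeasurable_lintegral_mul (by fun_prop) (hs₁.enorm.aemeasurable.mul hgm)
  have hm₂ : AEMeasurable fun P => ∫⁻ p, ENNReal.ofReal (H P) * (‖s₂ p‖ₑ * g p) :=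
    aemeasurable_lintegral_mul (by fun_prop) (hs₂.enorm.aemeasurable.mul hgm)
  rw [wnorm_eq, wnorm_eq]
  refine (eLpNorm_mono_enorm fun P => hpointwise P).trans ((eLpNorm_add_le hm₁.aestronglyMeasurable
    hm₂.aestronglyMeasurable one_le_two).trans ?_)
  refine (add_le_add (eLpNorm_lintegral_kernelMajorant_sub_mul_le hτ hF hs₁ hgm hs₁F)
    (eLpNorm_lintegral_kernelMajorant_mul_le hτ hF hs₂ hgm hs₂F)).trans_eq ?_
  rw [← two_mul, ← mul_assoc, mul_assoc 2 F, ENNReal.ofReal_mul zero_le_two, ENNReal.ofReal_ofNat]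

/-! ### Decay estimates -/

section WeightRatio

variable {τ : ℝ}

lemma sqLen_charTranspose_div_weight_le (hτ : 0 ≤ τ) (p : ℝ × ℝ) :
    sqLen (charTranspose τ p) / weight p ≤ 4 * Real.exp (-τ) := by
  rw [div_le_iff₀ (weight_pos p)]
  refine (sqLen_charTranspose_le hτ p).trans ?_
  rw [weight_eq]
  gcongr
  linarith

lemma weight_charTranspose_div_weight_le (hτ : 0 ≤ τ) (p : ℝ × ℝ) :
    weight (charTranspose τ p) / weight p ≤ 4 * (Real.exp (-τ) + (weight p)⁻¹) := by
  have h := sqLen_charTranspose_div_weight_le hτ p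
  rw [weight_eq (charTranspose τ p), add_div, one_div]
  linarith [inv_pos.2 (weight_pos p)]

lemma weight_charTranspose_div_weight_le_four (hτ : 0 ≤ τ) (p : ℝ × ℝ) :
    weight (charTranspose τ p) / weight p ≤ 4 := by
  have h := sqLen_charTranspose_le hτ p
  have ha : Real.exp (-τ) ≤ 1 := Real.exp_le_one_iff.2 (by linarith)
  have := mul_le_mul_of_nonneg_right ha (sqLen_nonneg p)
  rw [div_le_iff₀ (weight_pos p), weight_eq, weight_eq]
  linarith

end WeightRatio

lemma add_rpow_le_two_mul_rpow_sub_two_mul {a y m : ℝ} (ha : 0 < a) (hy : 0 ≤ y) (hm : m ≤ 2) :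
    (a + y) ^ m ≤ 2 * a ^ (m - 2) * (a ^ 2 + y ^ 2) := by
  calc (a + y) ^ m = (a + y) ^ (m - 2) * (a + y) ^ 2 := by
        rw [← Real.rpow_natCast, ← Real.rpow_add (by positivity)]
        norm_num
    _ ≤ a ^ (m - 2) * (2 * (a ^ 2 + y ^ 2)) :=
        mul_le_mul (Real.rpow_le_rpow_of_nonpos ha (by linarith) (by linarith)) add_sq_le
          (sq_nonneg _) (by positivity)
    _ = _ := by ring

lemma add_rpow_le_two_rpow_mul {a y r : ℝ} (ha : 0 ≤ a) (ha1 : a ≤ 1) (hy : 0 ≤ y) (hy1 : y ≤ 1)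
    (hr : 2 ≤ r) : (a + y) ^ r ≤ 2 ^ r * (a ^ 2 + y ^ 2) := by
  have hmean : (a + y) / 2 ≤ 1 := by linarith
  calc (a + y) ^ r = 2 ^ r * ((a + y) / 2) ^ r := by
        rw [← Real.mul_rpow (by norm_num) (by positivity)]
        ring_nf
    _ ≤ 2 ^ r * ((a + y) / 2) ^ (2 : ℝ) := by
        gcongr 2 ^ r * ?_
        exact Real.rpow_le_rpow_of_exponent_ge_of_imp (by positivity) hmean hr
          fun _ h => by linarith
    _ ≤ 2 ^ r * (a ^ 2 + y ^ 2) := by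
        gcongr
        rw [Real.rpow_two]
        nlinarith [sq_nonneg (a - y), sq_nonneg a, sq_nonneg y]

lemma exp_neg_le_half {τ : ℝ} (hτ : 1 ≤ τ) : Real.exp (-τ) ≤ 1 / 2 := by
  have := (Real.exp_le_exp.2 (neg_le_neg hτ)).trans Real.exp_neg_one_lt_half.le
  linarith

lemma sq_add_sq_le_four_mul {τ : ℝ} (hτ : 1 ≤ τ) (y : ℝ) :
    Real.exp (-τ) ^ 2 + y ^ 2 ≤
      4 * (Real.exp (-τ) ^ 2 + (1 - Real.exp (-τ)) ^ 2 * y ^ 2) := by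
  have hb : 1 ≤ 4 * (1 - Real.exp (-τ)) ^ 2 := by nlinarith [exp_neg_le_half hτ]
  nlinarith [mul_le_mul_of_nonneg_right hb (sq_nonneg y), sq_nonneg (Real.exp (-τ))]

lemma continuous_weight_charTranspose_div (τ : ℝ) :
    Continuous fun p => weight (charTranspose τ p) / weight p :=
  (continuous_weight.comp (continuous_charTranspose τ)).div continuous_weight fun p =>
    (weight_pos p).ne'

lemma weight_div_nonneg (p q : ℝ × ℝ) : 0 ≤ weight q / weight p :=
  div_nonneg (weight_pos q).le (weight_pos p).le

lemma rpow_sq_eq {x : ℝ} (hx : 0 ≤ x) (r : ℝ) : (x ^ r) ^ 2 = x ^ (2 * r) := by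
  rw [← Real.rpow_natCast, ← Real.rpow_mul hx, mul_comm r]
  norm_num

lemma exists_wnorm_kernelOp_le (M : ℝ) : ∃ C : ℝ, 0 < C ∧ ∀ τ : ℝ, 0 < τ →
    ∀ m : ℝ, 0 ≤ m → m ≤ M → ∀ F : ℝ, 0 ≤ F →
    (∀ p, (weight (charTranspose τ p) / weight p) ^ m ≤
      F ^ 2 * (Real.exp (-τ) ^ 2 + (1 - Real.exp (-τ)) ^ 2 * (weight p)⁻¹ ^ 2)) →
    ∀ v : ℝ × ℝ → ℝ, AEMeasurable v →
      wnorm m (kernelOp τ v) ≤ ENNReal.ofReal (C * F) * wnorm m v := by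
  obtain ⟨C, hC, hK⟩ := exists_weight_rpow_mul_gaussKernel_sub_le (M / 2)
  have hS := schurConst_pos
  refine ⟨2 * C * schurConst, by positivity, fun τ hτ m hm hmM F hF hratio v hv => ?_⟩
  have ha : Real.exp (-τ) < 1 := by linarith [one_sub_exp_neg_pos hτ]
  rw [show 2 * C * schurConst * F = 2 * (C * F) * schurConst by ring]
  refine wnorm_integral_mul_le hτ (by positivity)
    (s₁ := fun p => C * (weight (charTranspose τ p) / weight p) ^ (m / 2)) (s₂ := fun _ => 0)
    (((continuous_weight_charTranspose_div τ).measurable.pow_const _).const_mul C)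
    measurable_const hv (fun p => ?_) (fun p => ?_) (fun P p => ?_)
  · rw [mul_pow, rpow_sq_eq (weight_div_nonneg _ _), mul_div_cancel₀ _ two_ne_zero, mul_pow,
      mul_assoc]
    exact mul_le_mul_of_nonneg_left (hratio p) (sq_nonneg C)
  · rw [zero_pow two_ne_zero]
    positivity
  · rw [abs_of_nonneg (gaussKernel_nonneg _ _), Real.div_rpow (weight_pos _).le (weight_pos p).le,
      zero_mul, add_zero]
    refine (hK (m / 2) (by linarith) (by linarith) _ (Real.exp_nonneg _) ha _ _).trans_eq ?_
    have := (Real.rpow_pos_of_pos (weight_pos p) (m / 2)).ne'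
    field_simp

lemma exists_wnorm_kernelOp_le_of_le_one (M : ℝ) : ∃ C : ℝ, 0 < C ∧ ∀ τ : ℝ, 0 < τ → τ ≤ 1 →
    ∀ m : ℝ, 0 ≤ m → m ≤ M → ∀ v : ℝ × ℝ → ℝ, AEMeasurable v →
      wnorm m (kernelOp τ v) ≤ ENNReal.ofReal C * wnorm m v := by
  obtain ⟨C, hC, h⟩ := exists_wnorm_kernelOp_le M
  refine ⟨C * (3 * 4 ^ M), by positivity, fun τ hτ hτ1 m hm hmM v hv =>
    h τ hτ m hm hmM _ (by positivity) (fun p => ?_) v hv⟩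
  have ha : 1 / 3 ≤ Real.exp (-τ) := by
    have := Real.exp_neg_one_gt_d9.le.trans (Real.exp_le_exp.2 (neg_le_neg hτ1))
    linarith
  have h4 : 1 ≤ (4 : ℝ) ^ M := Real.one_le_rpow (by norm_num) (hm.trans hmM)
  calc (weight (charTranspose τ p) / weight p) ^ m
      ≤ 4 ^ m := Real.rpow_le_rpow (weight_div_nonneg _ _)
        (weight_charTranspose_div_weight_le_four hτ.le p) hm
    _ ≤ 4 ^ M := Real.rpow_le_rpow_of_exponent_le (by norm_num) hmM
    _ ≤ (4 ^ M) ^ 2 := le_self_pow₀ h4 two_ne_zero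
    _ = (3 * 4 ^ M) ^ 2 * (1 / 3) ^ 2 := by ring
    _ ≤ (3 * 4 ^ M) ^ 2 *
        (Real.exp (-τ) ^ 2 + (1 - Real.exp (-τ)) ^ 2 * (weight p)⁻¹ ^ 2) := by
        gcongr
        exact (pow_le_pow_left₀ (by norm_num) ha 2).trans
          (le_add_of_nonneg_right (by positivity))

lemma exists_wnorm_kernelOp_le_exp : ∃ C : ℝ, 0 < C ∧ ∀ τ : ℝ, 1 ≤ τ →
    ∀ m : ℝ, 0 ≤ m → m ≤ 2 → ∀ v : ℝ × ℝ → ℝ, AEMeasurable v →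
      wnorm m (kernelOp τ v) ≤
        ENNReal.ofReal (C * Real.exp ((1 - m / 2) * τ)) * wnorm m v := by
  obtain ⟨C, hC, h⟩ := exists_wnorm_kernelOp_le 2
  refine ⟨C * 12, by positivity, fun τ hτ m hm hm2 v hv => ?_⟩
  rw [mul_assoc]
  refine h τ (by linarith) m hm hm2 _ (by positivity) (fun p => ?_) v hv
  have hy : 0 < (weight p)⁻¹ := inv_pos.2 (weight_pos p)
  have hgrowth : Real.exp (-τ) ^ (m - 2) = Real.exp ((1 - m / 2) * τ) ^ 2 := by
    rw [← Real.exp_mul, ← Real.exp_nat_mul]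
    push_cast
    ring_nf
  calc (weight (charTranspose τ p) / weight p) ^ m
      ≤ (4 * (Real.exp (-τ) + (weight p)⁻¹)) ^ m := Real.rpow_le_rpow (weight_div_nonneg _ _)
        (weight_charTranspose_div_weight_le (by linarith) p) hm
    _ = 4 ^ m * (Real.exp (-τ) + (weight p)⁻¹) ^ m :=
        Real.mul_rpow (by norm_num) (by positivity)
    _ ≤ 4 ^ (2 : ℝ) * (2 * Real.exp (-τ) ^ (m - 2) * (4 * (Real.exp (-τ) ^ 2 +
          (1 - Real.exp (-τ)) ^ 2 * (weight p)⁻¹ ^ 2))) := by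
        gcongr
        · norm_num
        · exact (add_rpow_le_two_mul_rpow_sub_two_mul (Real.exp_pos _) hy.le hm2).trans
            (mul_le_mul_of_nonneg_left (sq_add_sq_le_four_mul hτ _) (by positivity))
    _ ≤ _ := by
        rw [hgrowth, mul_pow, Real.rpow_two]
        have : 0 ≤ Real.exp ((1 - m / 2) * τ) ^ 2 * (Real.exp (-τ) ^ 2 +
          (1 - Real.exp (-τ)) ^ 2 * (weight p)⁻¹ ^ 2) := by positivity
        linarith

lemma sqLen_div_weight_nonneg (p q : ℝ × ℝ) : 0 ≤ sqLen q / weight p :=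
  div_nonneg (sqLen_nonneg q) (weight_pos p).le

section MeanZero

variable {τ t m M : ℝ}

lemma sqLen_charTranspose_div_weight_rpow_le (hτ : 0 ≤ τ) (ht : 0 ≤ t) (p : ℝ × ℝ) :
    (sqLen (charTranspose τ p) / weight p) ^ (2 * t) ≤ 4 ^ (2 * t) * Real.exp (-t * τ) ^ 2 := by
  refine (Real.rpow_le_rpow (sqLen_div_weight_nonneg _ _)
    (sqLen_charTranspose_div_weight_le hτ p) (by positivity)).trans_eq ?_
  rw [Real.mul_rpow (by norm_num) (Real.exp_nonneg _), ← Real.exp_mul, ← Real.exp_nat_mul]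
  push_cast
  ring_nf

lemma four_mul_eight_rpow_le (hm : 0 ≤ m) (hmM : m ≤ M) :
    4 * (8 : ℝ) ^ m ≤ (2 * 8 ^ M) ^ 2 := by
  have h8 : (8 : ℝ) ^ m ≤ 8 ^ M := Real.rpow_le_rpow_of_exponent_le (by norm_num) hmM
  have h1 : 1 ≤ (8 : ℝ) ^ M := Real.one_le_rpow (by norm_num) (hm.trans hmM)
  nlinarith

lemma sqLen_rpow_mul_weight_rpow_le (hτ : 1 ≤ τ) (ht : 0 ≤ t) (htm : 2 + 2 * t ≤ m) (hmM : m ≤ M)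
    (p : ℝ × ℝ) :
    (sqLen (charTranspose τ p) / weight p) ^ (2 * t) *
        (weight (charTranspose τ p) / weight p) ^ (m - 2 * t) ≤
      (2 * 8 ^ M * Real.exp (-t * τ)) ^ 2 *
        (Real.exp (-τ) ^ 2 + (1 - Real.exp (-τ)) ^ 2 * (weight p)⁻¹ ^ 2) := by
  have hτ0 : 0 ≤ τ := by linarith
  have hr : 2 ≤ m - 2 * t := by linarith
  have hy : 0 < (weight p)⁻¹ := inv_pos.2 (weight_pos p)
  have hy1 : (weight p)⁻¹ ≤ 1 := inv_le_one_of_one_le₀ (one_le_weight p)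
  set S := Real.exp (-τ) ^ 2 + (1 - Real.exp (-τ)) ^ 2 * (weight p)⁻¹ ^ 2
  have hweight : (weight (charTranspose τ p) / weight p) ^ (m - 2 * t) ≤
      4 ^ (m - 2 * t) * (2 ^ m * (4 * S)) := by
    refine (Real.rpow_le_rpow (weight_div_nonneg _ _)
      (weight_charTranspose_div_weight_le hτ0 p) (by linarith)).trans ?_
    rw [Real.mul_rpow (by norm_num) (by positivity)]
    refine mul_le_mul_of_nonneg_left ((add_rpow_le_two_rpow_mul (Real.exp_nonneg _)
      (Real.exp_le_one_iff.2 (by linarith)) hy.le hy1 hr).trans ?_) (by positivity)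
    exact mul_le_mul (Real.rpow_le_rpow_of_exponent_le one_le_two (by linarith))
      (sq_add_sq_le_four_mul hτ _) (by positivity) (by positivity)
  calc _ ≤ (4 ^ (2 * t) * Real.exp (-t * τ) ^ 2) * (4 ^ (m - 2 * t) * (2 ^ m * (4 * S))) :=
        mul_le_mul (sqLen_charTranspose_div_weight_rpow_le hτ0 ht p) hweight
          (Real.rpow_nonneg (weight_div_nonneg _ _) _) (by positivity)
    _ = 4 * 8 ^ m * (Real.exp (-t * τ) ^ 2 * S) := by
        rw [show (8 : ℝ) = 4 * 2 by norm_num, Real.mul_rpow (by norm_num) (by norm_num),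
          show m = 2 * t + (m - 2 * t) by ring, Real.rpow_add (x := 4) (by norm_num)]
        ring_nf
    _ ≤ (2 * 8 ^ M) ^ 2 * (Real.exp (-t * τ) ^ 2 * S) := by
        gcongr
        exact four_mul_eight_rpow_le (by linarith) hmM
    _ = _ := by ring

lemma sqLen_rpow_mul_weight_rpow_sub_le (hτ : 1 ≤ τ) (ht : 0 ≤ t) (htm : 2 + 2 * t ≤ m)
    (hmM : m ≤ M) (p : ℝ × ℝ) :
    (sqLen (charTranspose τ p) / weight p) ^ (2 * t) * weight p ^ (2 * t - m) ≤
      (2 * 8 ^ M * Real.exp (-t * τ)) ^ 2 * ((1 - Real.exp (-τ)) ^ 2 * (weight p)⁻¹ ^ 2) := by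
  have hb : 1 ≤ 4 * (1 - Real.exp (-τ)) ^ 2 := by nlinarith [exp_neg_le_half hτ]
  have hweight : weight p ^ (2 * t - m) ≤ 4 * (1 - Real.exp (-τ)) ^ 2 * (weight p)⁻¹ ^ 2 := by
    calc weight p ^ (2 * t - m) ≤ weight p ^ (-2 : ℝ) :=
          Real.rpow_le_rpow_of_exponent_le (one_le_weight p) (by linarith)
      _ = (weight p)⁻¹ ^ 2 := by
          rw [Real.rpow_neg (weight_pos p).le, Real.rpow_two, inv_pow]
      _ ≤ _ := le_mul_of_one_le_left (sq_nonneg _) hb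
  have h4 : (4 : ℝ) ^ (2 * t) ≤ 8 ^ m :=
    (Real.rpow_le_rpow_of_exponent_le (by norm_num) (by linarith)).trans
      (Real.rpow_le_rpow (by norm_num) (by norm_num) (by linarith))
  calc _ ≤ (8 ^ m * Real.exp (-t * τ) ^ 2) *
        (4 * (1 - Real.exp (-τ)) ^ 2 * (weight p)⁻¹ ^ 2) :=
        mul_le_mul ((sqLen_charTranspose_div_weight_rpow_le (by linarith) ht p).trans
          (mul_le_mul_of_nonneg_right h4 (sq_nonneg _))) hweight
          (Real.rpow_nonneg (weight_pos p).le _) (by positivity)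
    _ = 4 * 8 ^ m *
        (Real.exp (-t * τ) ^ 2 * ((1 - Real.exp (-τ)) ^ 2 * (weight p)⁻¹ ^ 2)) := by ring
    _ ≤ (2 * 8 ^ M) ^ 2 *
        (Real.exp (-t * τ) ^ 2 * ((1 - Real.exp (-τ)) ^ 2 * (weight p)⁻¹ ^ 2)) := by
        gcongr
        exact four_mul_eight_rpow_le (by linarith) hmM
    _ = _ := by ring

lemma integrable_gaussKernel_mul (hτ : 0 < τ) (P : ℝ × ℝ) {v : ℝ × ℝ → ℝ} (hv : Integrable v) :
    Integrable fun p => gaussKernel (Real.exp (-τ)) (P - charTranspose τ p) * v p := by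
  have ha : Real.exp (-τ) < 1 := by linarith [one_sub_exp_neg_pos hτ]
  obtain ⟨C, hC, h⟩ := exists_weight_rpow_mul_gaussKernel_le 0
  refine hv.bdd_mul (c := C * ((1 - Real.exp (-τ)) ^ 2)⁻¹) (by fun_prop) (ae_of_all _ fun p => ?_)
  have hbound := h 0 le_rfl _ (Real.exp_nonneg _) ha (P - charTranspose τ p)
  rw [Real.rpow_zero, one_mul] at hbound
  rw [Real.norm_of_nonneg (gaussKernel_nonneg _ _)]
  exact hbound.trans (mul_le_mul_of_nonneg_left (kernelMajorant_le (Real.exp_nonneg _) ha _) hC.le)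

lemma kernelOp_eq_of_integral_eq_zero (hτ : 0 < τ) {v : ℝ × ℝ → ℝ} (hv : Integrable v)
    (hv0 : ∫ p, v p = 0) :
    kernelOp τ v = fun P => ∫ p, (gaussKernel (Real.exp (-τ)) (P - charTranspose τ p) -
      gaussKernel (Real.exp (-τ)) P) * v p := by
  ext P
  simp only [sub_mul, kernelOp]
  rw [integral_sub (integrable_gaussKernel_mul hτ P hv) (hv.const_mul _), integral_const_mul, hv0,
    mul_zero, sub_zero]

end MeanZero

lemma exists_weight_rpow_mul_abs_gaussKernel_sub_le_mul_weight_rpow (M : ℝ) : ∃ C : ℝ, 0 < C ∧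
    ∀ s t : ℝ, 0 ≤ t → t ≤ 1 / 2 → t ≤ s → s ≤ M → ∀ a : ℝ, 0 ≤ a → a ≤ 1 / 2 → ∀ P q p,
      weight P ^ s * |gaussKernel a (P - q) - gaussKernel a P| ≤
        (C * ((sqLen q / weight p) ^ t * (weight q / weight p) ^ (s - t)) *
            kernelMajorant a (P - q) +
          C * ((sqLen q / weight p) ^ t * weight p ^ (t - s)) * kernelMajorant a P) *
          weight p ^ s := by
  obtain ⟨C, hC, hK⟩ := exists_weight_rpow_mul_abs_gaussKernel_sub_le M
  refine ⟨C, hC, fun s t ht ht2 hts hsM a h0 h1 P q p => ?_⟩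
  refine (hK s t ht ht2 hts hsM a h0 h1 P q).trans_eq ?_
  have hwt := (Real.rpow_pos_of_pos (weight_pos p) t).ne'
  have hws := (Real.rpow_pos_of_pos (weight_pos p) s).ne'
  rw [Real.div_rpow (sqLen_nonneg _) (weight_pos p).le,
    Real.div_rpow (weight_pos _).le (weight_pos p).le, Real.rpow_sub (weight_pos p),
    Real.rpow_sub (weight_pos p)]
  field_simp

lemma exists_wnorm_kernelOp_le_exp_of_integral_eq_zero (M : ℝ) : ∃ C : ℝ, 0 < C ∧
    ∀ τ : ℝ, 1 ≤ τ → ∀ m t : ℝ, 0 ≤ t → t ≤ 1 / 2 → 2 + 2 * t ≤ m → m ≤ M →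
    ∀ v : ℝ × ℝ → ℝ, Integrable v → ∫ p, v p = 0 →
      wnorm m (kernelOp τ v) ≤ ENNReal.ofReal (C * Real.exp (-t * τ)) * wnorm m v := by
  obtain ⟨C, hC, hK⟩ := exists_weight_rpow_mul_abs_gaussKernel_sub_le_mul_weight_rpow (M / 2)
  have hS := schurConst_pos
  refine ⟨2 * (C * (2 * 8 ^ M)) * schurConst, by positivity,
    fun τ hτ m t ht ht2 htm hmM v hv hv0 => ?_⟩
  have hτ0 : 0 < τ := by linarith
  rw [kernelOp_eq_of_integral_eq_zero hτ0 hv hv0, mul_right_comm, mul_assoc 2,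
    mul_assoc C]
  set ρ := fun p => sqLen (charTranspose τ p) / weight p
  have hρ0 (p : ℝ × ℝ) : 0 ≤ ρ p := sqLen_div_weight_nonneg _ _
  have hρm : Measurable ρ := (Continuous.div (by fun_prop) continuous_weight
    fun p => (weight_pos p).ne').measurable
  refine wnorm_integral_mul_le hτ0 (by positivity)
    (s₁ := fun p => C * (ρ p ^ t * (weight (charTranspose τ p) / weight p) ^ (m / 2 - t)))
    (s₂ := fun p => C * (ρ p ^ t * weight p ^ (t - m / 2)))
    (((hρm.pow_const t).mul
      ((continuous_weight_charTranspose_div τ).measurable.pow_const _)).const_mul C)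
    (((hρm.pow_const t).mul (continuous_weight.measurable.pow_const _)).const_mul C)
    hv.aemeasurable (fun p => ?_) (fun p => ?_) (fun P p => ?_)
  · rw [mul_pow, mul_pow, mul_pow C, rpow_sq_eq (hρ0 p), rpow_sq_eq (weight_div_nonneg _ _),
      mul_sub, mul_div_cancel₀ _ two_ne_zero, mul_assoc]
    exact mul_le_mul_of_nonneg_left (sqLen_rpow_mul_weight_rpow_le hτ ht htm hmM p) (sq_nonneg C)
  · rw [mul_pow, mul_pow, mul_pow C, rpow_sq_eq (hρ0 p), rpow_sq_eq (weight_pos p).le,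
      mul_sub, mul_div_cancel₀ _ two_ne_zero, mul_assoc]
    exact mul_le_mul_of_nonneg_left (sqLen_rpow_mul_weight_rpow_sub_le hτ ht htm hmM p)
      (sq_nonneg C)
  · exact hK (m / 2) t ht ht2 (by linarith) (by linarith) _ (Real.exp_nonneg _)
      (exp_neg_le_half hτ) P _ p

lemma wnorm_ofReal (m : ℝ) (f : ℝ × ℝ → ℝ) : wnorm m (fun P => (f P : ℂ)) = wnorm m f := by
  simp only [wnorm, Complex.norm_real]

lemma le_ofReal_mul_self {x : ℝ≥0∞} {c : ℝ} (hc : 1 ≤ c) : x ≤ ENNReal.ofReal c * x :=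
  le_mul_of_one_le_left zero_le (ENNReal.one_le_ofReal.2 hc)

lemma exists_wnorm_semigroupLinfty_le : ∃ C : ℝ, 0 < C ∧
    ∀ u₀ : 𝓢(ℝ × ℝ, ℝ), ∀ τ : ℝ, 0 ≤ τ → ∀ m : ℝ, 0 ≤ m → m ≤ 2 →
      wnorm m (semigroupLinfty τ u₀) ≤
        ENNReal.ofReal (C * Real.exp ((1 - m / 2) * τ)) * wnorm m u₀ := by
  obtain ⟨C₁, hC₁, hshort⟩ := exists_wnorm_kernelOp_le_of_le_one 2
  obtain ⟨C₂, hC₂, hlong⟩ := exists_wnorm_kernelOp_le_exp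
  refine ⟨1 + C₁ + C₂, by positivity, fun u₀ τ hτ m hm hm2 => ?_⟩
  have hu₀ : AEMeasurable u₀ := u₀.continuous.measurable.aemeasurable
  have hexp : 1 ≤ Real.exp ((1 - m / 2) * τ) :=
    Real.one_le_exp (mul_nonneg (by linarith) hτ)
  rcases hτ.eq_or_lt with rfl | hτ
  · rw [funext (semigroupLinfty_zero u₀), wnorm_ofReal]
    exact le_ofReal_mul_self (one_le_mul_of_one_le_of_one_le (by linarith) hexp)
  rw [funext (semigroupLinfty_of_pos hτ u₀), wnorm_ofReal]
  rcases le_total τ 1 with hτ1 | hτ1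
  · refine (hshort τ hτ hτ1 m hm hm2 u₀ hu₀).trans ?_
    gcongr
    nlinarith
  · refine (hlong τ hτ1 m hm hm2 u₀ hu₀).trans ?_
    gcongr
    linarith

lemma semigroupLinfty_sub_gauss2 {τ : ℝ} (hτ : 0 < τ) (u₀ : 𝓢(ℝ × ℝ, ℝ)) (c : ℝ) (P : ℝ × ℝ) :
    semigroupLinfty τ u₀ P - ((c * gauss2 P : ℝ) : ℂ) =
      kernelOp τ (fun p => u₀ p - c * gauss2 p) P := by
  have hsub : kernelOp τ (fun p => u₀ p - c * gauss2 p) P =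
      kernelOp τ u₀ P - c * kernelOp τ gauss2 P := by
    simp only [kernelOp, mul_sub, mul_left_comm _ c]
    rw [integral_sub (integrable_gaussKernel_mul hτ P u₀.integrable)
      ((integrable_gaussKernel_mul hτ P integrable_gauss2).const_mul c), integral_const_mul]
  rw [hsub, kernelOp_gauss2 hτ, semigroupLinfty_of_pos hτ, Complex.ofReal_sub]

lemma integral_sub_integral_mul_gauss2 {u : ℝ × ℝ → ℝ} (hu : Integrable u) :
    ∫ p, (u p - (∫ q, u q) * gauss2 p) = 0 := by
  rw [integral_sub hu (integrable_gauss2.const_mul _), integral_const_mul, integral_gauss2, mul_one,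
    sub_self]

lemma exists_wnorm_semigroupLinfty_sub_gauss2_le (M : ℝ) : ∃ C : ℝ, 0 < C ∧
    ∀ u₀ : 𝓢(ℝ × ℝ, ℝ), ∀ τ : ℝ, 0 ≤ τ →
    ∀ m t : ℝ, 0 ≤ t → t ≤ 1 / 2 → 2 + 2 * t ≤ m → m ≤ M →
      wnorm m (fun P => semigroupLinfty τ u₀ P - (((∫ p, u₀ p) * gauss2 P : ℝ) : ℂ)) ≤
        ENNReal.ofReal (C * Real.exp (-t * τ)) *
          wnorm m (fun P => u₀ P - (∫ p, u₀ p) * gauss2 P) := by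
  obtain ⟨C₁, hC₁, hshort⟩ := exists_wnorm_kernelOp_le_of_le_one M
  obtain ⟨C₂, hC₂, hlong⟩ := exists_wnorm_kernelOp_le_exp_of_integral_eq_zero M
  refine ⟨1 + 3 * C₁ + C₂, by positivity, fun u₀ τ hτ m t ht ht2 htm hmM => ?_⟩
  have hv : Integrable fun p => u₀ p - (∫ q, u₀ q) * gauss2 p :=
    u₀.integrable.sub (integrable_gauss2.const_mul _)
  rcases hτ.eq_or_lt with rfl | hτ
  · simp only [semigroupLinfty_zero, ← Complex.ofReal_sub]
    rw [wnorm_ofReal, mul_zero, Real.exp_zero, mul_one]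
    exact le_ofReal_mul_self (by linarith)
  simp only [semigroupLinfty_sub_gauss2 hτ]
  rw [wnorm_ofReal]
  rcases le_total τ 1 with hτ1 | hτ1
  · refine (hshort τ hτ hτ1 m (by linarith) hmM _ hv.aemeasurable).trans ?_
    have hexp : 1 / 3 ≤ Real.exp (-t * τ) := by
      have : -1 ≤ -t * τ := by nlinarith
      linarith [Real.exp_neg_one_gt_d9, Real.exp_le_exp.2 this]
    gcongr
    nlinarith
  · refine (hlong τ hτ1 m t ht ht2 htm hmM _ hv (integral_sub_integral_mul_gauss2
      u₀.integrable)).trans ?_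
    gcongr
    linarith

/-- Proposition 4.1: decay estimates for the semigroup `e^{τ L_∞}` in weighted spaces
`L²(m)`, with `M(u₀) = ∫ u₀` and Gaussian `G`:
(i) `‖e^{τL_∞} u₀‖_{L²(m)} ≤ C e^{(1 - m/2)τ} ‖u₀‖_{L²(m)}` for `0 ≤ m ≤ 2`;
(ii) `‖e^{τL_∞} u₀ - M(u₀)G‖_{L²(m)} ≤ C e^{-(m-2)τ/2} ‖u₀ - M(u₀)G‖_{L²(m)}` for `2 ≤ m ≤ 3`;
(iii) `‖e^{τL_∞} u₀ - M(u₀)G‖_{L²(m)} ≤ C(m) e^{-τ/2} ‖u₀ - M(u₀)G‖_{L²(m)}` for `m ≥ 3`. -/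
theorem stmt_19 :
    (∃ C : ℝ, 0 < C ∧
      ∀ u₀ : 𝓢(ℝ × ℝ, ℝ), ∀ τ : ℝ, 0 ≤ τ → ∀ m : ℝ, 0 ≤ m → m ≤ 2 →
        wnorm m (semigroupLinfty τ u₀) ≤
          ENNReal.ofReal (C * Real.exp ((1 - m / 2) * τ)) * wnorm m (fun p => u₀ p)) ∧
    (∃ C : ℝ, 0 < C ∧
      ∀ u₀ : 𝓢(ℝ × ℝ, ℝ), ∀ τ : ℝ, 0 ≤ τ → ∀ m : ℝ, 2 ≤ m → m ≤ 3 →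
        wnorm m (fun P => semigroupLinfty τ u₀ P -
            (((∫ p : ℝ × ℝ, u₀ p) * gauss2 P : ℝ) : ℂ)) ≤
          ENNReal.ofReal (C * Real.exp (-(m - 2) / 2 * τ)) *
            wnorm m (fun P => u₀ P - (∫ p : ℝ × ℝ, u₀ p) * gauss2 P)) ∧
    (∀ m : ℝ, 3 ≤ m →
      ∃ C : ℝ, 0 < C ∧
        ∀ u₀ : 𝓢(ℝ × ℝ, ℝ), ∀ τ : ℝ, 0 ≤ τ →
          wnorm m (fun P => semigroupLinfty τ u₀ P -
              (((∫ p : ℝ × ℝ, u₀ p) * gauss2 P : ℝ) : ℂ)) ≤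
            ENNReal.ofReal (C * Real.exp (-τ / 2)) *
              wnorm m (fun P => u₀ P - (∫ p : ℝ × ℝ, u₀ p) * gauss2 P)) := by
  refine ⟨exists_wnorm_semigroupLinfty_le, ?_, fun m hm => ?_⟩
  · obtain ⟨C, hC, hdecay⟩ := exists_wnorm_semigroupLinfty_sub_gauss2_le 3
    refine ⟨C, hC, fun u₀ τ hτ m h2 h3 => ?_⟩
    rw [neg_div]
    exact hdecay u₀ τ hτ m ((m - 2) / 2) (by linarith) (by linarith) (by linarith) h3
  · obtain ⟨C, hC, hdecay⟩ := exists_wnorm_semigroupLinfty_sub_gauss2_le m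
    refine ⟨C, hC, fun u₀ τ hτ => ?_⟩
    rw [show -τ / 2 = -(1 / 2) * τ by ring]
    exact hdecay u₀ τ hτ m (1 / 2) (by norm_num) le_rfl (by linarith) le_rfl
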